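/- arXiv:2109.08278 — 3 statements merged into one kernel-verified Lean document; each statement's English description precedes it below -/
import Mathlib

section
/- Let A = p(s; t) and H = p(s′; t′) be moded atoms with the same predicate symbol (so s, s′ have equal lengths and t, t′ have equal lengths), such that Var(A) ∩ Var(H) = ∅, every term of the input tuple s is ground, and H is weakly linear (every variable with more than one occurrence in H occurs in an input position of H). Then the equation set (s ≐̈ s′) ∪ (t ≐̈ t′) is WNSTO. -/
/-- Finite first-order terms: variables and function applications.
A function symbol is identified by its name together with the number of
arguments it is applied to (fixed arity). -/
inductive Trm : Type where
  | var : ℕ → Trm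
  | fn  : ℕ → List Trm → Trm

namespace Trm

/-- `|t|`: the number of occurrences of variables and function symbols
(including constants) in the term `t`. -/
def size : Trm → ℕ
  | .var _ => 1
  | .fn _ ts => 1 + (ts.attach.map (fun ⟨t, _⟩ => size t)).sum
decreasing_by
  have := List.sizeOf_lt_of_mem ‹_ ∈ ts›
  simp [Trm.fn.sizeOf_spec]; omega

/-- Application of a substitution (a map from variables to terms) to a term. -/
def subst (σ : ℕ → Trm) : Trm → Trm
  | .var x => σ x
  | .fn f ts => .fn f (ts.attach.map (fun ⟨t, _⟩ => subst σ t))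
decreasing_by
  have := List.sizeOf_lt_of_mem ‹_ ∈ ts›
  simp [Trm.fn.sizeOf_spec]; omega

/-- The number of occurrences of the variable `x` in a term. -/
def count (x : ℕ) : Trm → ℕ
  | .var y => if y = x then 1 else 0
  | .fn _ ts => (ts.attach.map (fun ⟨t, _⟩ => count x t)).sum
decreasing_by
  have := List.sizeOf_lt_of_mem ‹_ ∈ ts›
  simp [Trm.fn.sizeOf_spec]; omega

/-- `Occurs x t` : the variable `x` occurs in the term `t`. -/
inductive Occurs (x : ℕ) : Trm → Prop where
  | var : Occurs x (.var x)
  | fn {f : ℕ} {ts : List Trm} {t : Trm} : t ∈ ts → Occurs x t → Occurs x (.fn f ts)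

end Trm

/-- The set of variables occurring in a term. -/
def varSet (t : Trm) : Set ℕ := {x | Trm.Occurs x t}

/-- The set of variables occurring in a list (tuple) of terms. -/
def varsL (l : List Trm) : Set ℕ := {x | ∃ t ∈ l, Trm.Occurs x t}

/-- The number of occurrences of a variable in a list (tuple) of terms. -/
def countL (x : ℕ) (l : List Trm) : ℕ := (l.map (Trm.count x)).sum

/-- A term is ground if no variable occurs in it. -/
def Ground (t : Trm) : Prop := ∀ x, ¬ Trm.Occurs x t

/-- An equation set: a set of equations `s ≐ t` between terms,
represented as pairs of terms. -/
abbrev EqSet := Set (Trm × Trm)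

/-- `σ` is a solution (unifier) of the equation set `E`. -/
def Solves (σ : ℕ → Trm) (E : EqSet) : Prop :=
  ∀ e ∈ E, Trm.subst σ e.1 = Trm.subst σ e.2

/-- `E` is unifiable: it has a unifier. -/
def Unifiable (E : EqSet) : Prop := ∃ σ, Solves σ E

/-- `θ` is a most general unifier of `E`. -/
def IsMgu (θ : ℕ → Trm) (E : EqSet) : Prop :=
  Solves θ E ∧ ∀ σ, Solves σ E → ∃ ρ, ∀ x, σ x = Trm.subst ρ (θ x)

/-- The equation set `s ≐̈ t` pairing corresponding members of two
equal-length tuples of terms. -/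
def zipEqs (s t : List Trm) : EqSet := {e | e ∈ s.zip t}

/-- The substitution `{X/t}` mapping `X` to `t` and every other variable
to itself. -/
def single (X : ℕ) (t : Trm) : ℕ → Trm :=
  fun y => if y = X then t else .var y

/-- The equation set `Eθ`: the substitution applied to both sides of
every equation of `E`. -/
def substE (θ : ℕ → Trm) (E : EqSet) : EqSet :=
  (fun e => (Trm.subst θ e.1, Trm.subst θ e.2)) '' E

/-- One step of the Martelli–Montanari algorithm MMA: actions (1), (3), (4),
(5).  (Actions (2) and (6) halt with failure and produce no next equation
set; their applicability is captured by `ClashApp` and `OccApp` below.)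
Two function applications carry the same function symbol iff they have the
same name and the same number of arguments (fixed arity). -/
inductive MMAStep : EqSet → EqSet → Prop where
  /-- Action (1): replace `f(s1,…,sn) ≐ f(t1,…,tn)` by `s1 ≐ t1, …, sn ≐ tn`. -/
  | decomp {E : EqSet} {f : ℕ} {sl tl : List Trm} :
      (Trm.fn f sl, Trm.fn f tl) ∈ E → sl.length = tl.length →
      MMAStep E ((E \ {(Trm.fn f sl, Trm.fn f tl)}) ∪ {e | e ∈ sl.zip tl})
  /-- Action (3): delete an equation `X ≐ X`. -/
  | delete {E : EqSet} {x : ℕ} :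
      (Trm.var x, Trm.var x) ∈ E →
      MMAStep E (E \ {(Trm.var x, Trm.var x)})
  /-- Action (4): replace `t ≐ X` (`t` not a variable) by `X ≐ t`. -/
  | flip {E : EqSet} {t : Trm} {x : ℕ} :
      (t, Trm.var x) ∈ E → (∀ y, t ≠ Trm.var y) →
      MMAStep E ((E \ {(t, Trm.var x)}) ∪ {(Trm.var x, t)})
  /-- Action (5): on `X ≐ t` with `X ∉ Var(t)` and `X` occurring elsewhere,
  apply `{X/t}` to all other equations. -/
  | elim {E : EqSet} {x : ℕ} {t : Trm} :
      (Trm.var x, t) ∈ E → ¬ Trm.Occurs x t →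
      (∃ e ∈ E \ {(Trm.var x, t)}, Trm.Occurs x e.1 ∨ Trm.Occurs x e.2) →
      MMAStep E ({(Trm.var x, t)} ∪ substE (single x t) (E \ {(Trm.var x, t)}))

/-- Action (2) is applicable to `E`: `E` contains an equation
`f(s1,…,sn) ≐ g(t1,…,tm)` where the two function symbols differ. -/
def ClashApp (E : EqSet) : Prop :=
  ∃ f sl g tl, (Trm.fn f sl, Trm.fn g tl) ∈ E ∧
    (f ≠ g ∨ sl.length ≠ tl.length)

/-- Action (6) (the occur-check) is applicable to `E`: `E` contains an
equation `X ≐ t` with `X ∈ Var(t)` and `X ≠ t`. -/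
def OccApp (E : EqSet) : Prop :=
  ∃ x t, (Trm.var x, t) ∈ E ∧ Trm.Occurs x t ∧ t ≠ Trm.var x

/-- One step of the algorithm MMA⁻ (MMA without the occur-check):
actions (1), (3), (4), (5a), (5b). -/
inductive MMAmStep : EqSet → EqSet → Prop where
  /-- Action (1). -/
  | decomp {E : EqSet} {f : ℕ} {sl tl : List Trm} :
      (Trm.fn f sl, Trm.fn f tl) ∈ E → sl.length = tl.length →
      MMAmStep E ((E \ {(Trm.fn f sl, Trm.fn f tl)}) ∪ {e | e ∈ sl.zip tl})
  /-- Action (3). -/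
  | delete {E : EqSet} {x : ℕ} :
      (Trm.var x, Trm.var x) ∈ E →
      MMAmStep E (E \ {(Trm.var x, Trm.var x)})
  /-- Action (4). -/
  | flip {E : EqSet} {t : Trm} {x : ℕ} :
      (t, Trm.var x) ∈ E → (∀ y, t ≠ Trm.var y) →
      MMAmStep E ((E \ {(t, Trm.var x)}) ∪ {(Trm.var x, t)})
  /-- Action (5a): on `X ≐ Y` with `X, Y` distinct variables and `X`
  occurring elsewhere, apply `{X/Y}` to all other equations. -/
  | elimVar {E : EqSet} {x y : ℕ} :
      (Trm.var x, Trm.var y) ∈ E → x ≠ y →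
      (∃ e ∈ E \ {(Trm.var x, Trm.var y)}, Trm.Occurs x e.1 ∨ Trm.Occurs x e.2) →
      MMAmStep E
        ({(Trm.var x, Trm.var y)} ∪
          substE (single x (Trm.var y)) (E \ {(Trm.var x, Trm.var y)}))
  /-- Action (5b): on `X ≐ t`, `X ≐ u` with `t, u` distinct non-variable
  terms and `|t| ≤ |u|`, replace `X ≐ u` by `t ≐ u`. -/
  | merge {E : EqSet} {x : ℕ} {t u : Trm} :
      (Trm.var x, t) ∈ E → (Trm.var x, u) ∈ E → t ≠ u →
      (∀ y, t ≠ Trm.var y) → (∀ y, u ≠ Trm.var y) → t.size ≤ u.size →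
      MMAmStep E ((E \ {(Trm.var x, u)}) ∪ {(t, u)})

/-- `F` is reachable from `E` by (non-failing) actions of MMA. -/
def Reachable (E F : EqSet) : Prop := Relation.ReflTransGen MMAStep E F

/-- `E` is NSTO: no run of MMA on `E` performs action (6), i.e. the
occur-check action is never applicable along any run. -/
def NSTO (E : EqSet) : Prop := ∀ F, Reachable E F → ¬ OccApp F

/-- `E` is WNSTO: there exists an occur-check free run of MMA on `E`, i.e. a
maximal run that either halts with failure by action (2), or ends with an
equation set to which no action (including (2) and (6)) applies — without
ever performing action (6). -/
def WNSTO (E : EqSet) : Prop :=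
  ∃ F, Reachable E F ∧
    (ClashApp F ∨ (¬ ClashApp F ∧ ¬ OccApp F ∧ ∀ F', ¬ MMAStep F F'))


theorem Trm.ind {P : Trm → Prop} (hv : ∀ x, P (.var x))
    (hf : ∀ f ts, (∀ t ∈ ts, P t) → P (.fn f ts)) : ∀ t, P t
  | .var x => hv x
  | .fn f ts => hf f ts (fun t _ => Trm.ind hv hf t)
termination_by t => sizeOf t
decreasing_by
  have := List.sizeOf_lt_of_mem ‹_ ∈ ts›
  simp [Trm.fn.sizeOf_spec]; omega

theorem size_fn (f ts) : (Trm.fn f ts).size = 1 + (ts.map Trm.size).sum := by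
  rw [Trm.size]; congr 2; simp
theorem size_pos (t : Trm) : 1 ≤ t.size := by
  cases t <;> simp [Trm.size]
theorem subst_fn (σ f ts) : (Trm.fn f ts).subst σ = .fn f (ts.map (Trm.subst σ)) := by
  rw [Trm.subst]; simp
theorem count_fn (x f ts) : (Trm.fn f ts).count x = countL x ts := by
  rw [Trm.count, countL]; simp
theorem occ_var {x y} : Trm.Occurs x (.var y) ↔ x = y := by
  constructor
  · intro h; cases h; rfl
  · rintro rfl; exact .var
theorem occ_fn {x f ts} : Trm.Occurs x (.fn f ts) ↔ ∃ t ∈ ts, Trm.Occurs x t := by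
  constructor
  · intro h; cases h with | fn h1 h2 => exact ⟨_, h1, h2⟩
  · rintro ⟨t, h1, h2⟩; exact .fn h1 h2

theorem countL_zero_of {x ts} (ih : ∀ t ∈ ts, Trm.count x t = 0 ↔ ¬ Trm.Occurs x t) :
    countL x ts = 0 ↔ ∀ t ∈ ts, ¬ Trm.Occurs x t := by
  rw [countL, List.sum_eq_zero_iff]
  simp only [List.mem_map, forall_exists_index, and_imp, forall_apply_eq_imp_iff₂]
  exact forall₂_congr ih

theorem count_zero {x} (t : Trm) : t.count x = 0 ↔ ¬ Trm.Occurs x t := by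
  induction t using Trm.ind with
  | hv y => rw [occ_var, Trm.count]; split <;> simp_all [eq_comm]
  | hf f ts ih => rw [count_fn, occ_fn, countL_zero_of ih]; push Not; rfl

theorem countL_zero {x ts} : countL x ts = 0 ↔ ∀ t ∈ ts, ¬ Trm.Occurs x t :=
  countL_zero_of (fun t _ => count_zero t)

theorem occ_subst {x y g} (t : Trm) : Trm.Occurs y (t.subst (single x g)) ↔
    (y ≠ x ∧ Trm.Occurs y t) ∨ (Trm.Occurs x t ∧ Trm.Occurs y g) := by
  induction t using Trm.ind with
  | hv z =>
    rw [Trm.subst, single, occ_var, occ_var]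
    by_cases h : z = x
    · subst h; simp
    · rw [if_neg h, occ_var]; grind
  | hf f ts ih =>
    rw [subst_fn, occ_fn, occ_fn, occ_fn]
    simp only [List.mem_map, exists_exists_and_eq_and]
    grind

theorem subst_id {x g} (t : Trm) (h : ¬ Trm.Occurs x t) : t.subst (single x g) = t := by
  induction t using Trm.ind with
  | hv z => rw [Trm.subst, single, if_neg]; rw [occ_var] at h; exact fun e => h e.symm
  | hf f ts ih =>
    rw [subst_fn]; rw [occ_fn] at h; push Not at h
    congr 1
    conv_rhs => rw [← List.map_id ts]
    exact List.map_congr_left fun t ht => ih t ht (h t ht)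

theorem countL_map_le {y ts} {φ : Trm → Trm} (h : ∀ t ∈ ts, (φ t).count y ≤ t.count y) :
    countL y (ts.map φ) ≤ countL y ts := by
  rw [countL, countL, List.map_map]
  exact List.sum_le_sum h

theorem count_subst_le {x y g} (hg : Ground g) (t : Trm) :
    (t.subst (single x g)).count y ≤ t.count y := by
  induction t using Trm.ind with
  | hv z =>
    rw [Trm.subst, single]
    split
    · rw [(count_zero g).2 (hg y)]; simp
    · rfl
  | hf f ts ih => rw [subst_fn, count_fn, count_fn]; exact countL_map_le ih

theorem countL_sub {y : ℕ} {l l' : List Trm} (h : l.Sublist l') : countL y l ≤ countL y l' :=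
  (h.map _).sum_le_sum (by simp)

theorem countL_append {y l l'} : countL y (l ++ l') = countL y l + countL y l' := by
  simp [countL]
theorem countL_cons {y t l} : countL y (t :: l) = t.count y + countL y l := by
  simp [countL]

def OccE (x : ℕ) (e : Trm × Trm) : Prop := Trm.Occurs x e.1 ∨ Trm.Occurs x e.2

def MInv (S : EqSet) (L : List (Trm × Trm)) : Prop :=
  (∀ e ∈ S, ∃ x t, e = (.var x, t) ∧ ¬ Trm.Occurs x t ∧
    (∀ e' ∈ S, e' ≠ e → ¬ OccE x e') ∧ ∀ e' ∈ L, ¬ OccE x e') ∧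
  (∀ e ∈ L, ∀ e' ∈ L, ∀ x, Trm.Occurs x e.1 → ¬ Trm.Occurs x e'.2) ∧
  (∀ e ∈ S, ∀ e' ∈ L, ∀ x, Trm.Occurs x e'.2 → ¬ OccE x e)

theorem MInv.mono {S L L'} (h : MInv S L) (hs : ∀ e' ∈ L', ∃ e ∈ L,
    (∀ x, Trm.Occurs x e'.1 → Trm.Occurs x e.1) ∧ (∀ x, Trm.Occurs x e'.2 → Trm.Occurs x e.2)) :
    MInv S L' := by
  obtain ⟨h1, h2, h3⟩ := h
  refine ⟨fun e he => ?_, fun e he e' he' x hx hx' => ?_, fun e he e' he' x hx => ?_⟩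
  · obtain ⟨x, t, rfl, ht, hS, hL⟩ := h1 e he
    refine ⟨x, t, rfl, ht, hS, fun e' he' ho => ?_⟩
    obtain ⟨d, hd, hd1, hd2⟩ := hs e' he'
    exact hL d hd (ho.imp (hd1 _) (hd2 _))
  · obtain ⟨d, hd, hd1, hd2⟩ := hs e he
    obtain ⟨d', hd', hd1', hd2'⟩ := hs e' he'
    exact h2 d hd d' hd' x (hd1 _ hx) (hd2' _ hx')
  · obtain ⟨d', hd', hd1', hd2'⟩ := hs e' he'
    exact h3 e he d' hd' x (hd2' _ hx)

theorem MInv.sub {S L L'} (h : MInv S L) (hs : ∀ e ∈ L', e ∈ L) : MInv S L' :=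
  h.mono fun e he => ⟨e, hs e he, fun _ => id, fun _ => id⟩

theorem MInv.decomp {S L f sl tl} (h : MInv S ((.fn f sl, .fn f tl) :: L)) :
    MInv S (sl.zip tl ++ L) := by
  refine h.mono fun e he => ?_
  rcases List.mem_append.1 he with he | he
  · refine ⟨_, List.mem_cons_self, fun x hx => ?_, fun x hx => ?_⟩
    · exact .fn (List.of_mem_zip (a := e.1) (b := e.2) he).1 hx
    · exact .fn (List.of_mem_zip (a := e.1) (b := e.2) he).2 hx
  · exact ⟨e, List.mem_cons_of_mem _ he, fun _ => id, fun _ => id⟩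

theorem WNSTO.back {E F} (h : Reachable E F) (hF : WNSTO F) : WNSTO E := by
  obtain ⟨G, hG, hh⟩ := hF
  exact ⟨G, h.trans hG, hh⟩

theorem wnsto_nil {S} (h : MInv S []) : WNSTO (S ∪ {e | e ∈ ([] : List (Trm × Trm))}) := by
  have hS : S ∪ {e | e ∈ ([] : List (Trm × Trm))} = S := by simp
  rw [hS]
  have h1 := h.1
  refine ⟨S, .refl, Or.inr ⟨?_, ?_, ?_⟩⟩
  · rintro ⟨f, sl, g, tl, hm, -⟩
    obtain ⟨x, t, he, -⟩ := h1 _ hm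
    simp at he
  · rintro ⟨x, t, hm, ho, -⟩
    obtain ⟨x, t, he, h', -⟩ := h1 _ hm
    simp at he
    obtain ⟨rfl, rfl⟩ := he
    exact h' ho
  · intro F' hst
    cases hst with
    | decomp hm _ =>
      obtain ⟨x, t, he, -⟩ := h1 _ hm
      simp at he
    | delete hm =>
      obtain ⟨x, t, he, h', -⟩ := h1 _ hm
      simp at he
      obtain ⟨rfl, rfl⟩ := he
      exact h' .var
    | flip hm hn =>
      obtain ⟨x, t, he, h', -⟩ := h1 _ hm
      simp at he
      exact hn _ he.1
    | elim hm ho hx =>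
      obtain ⟨x, t, he, h', hS, -⟩ := h1 _ hm
      simp at he
      obtain ⟨rfl, rfl⟩ := he
      obtain ⟨e, he, hx⟩ := hx
      exact hS e he.1 he.2 hx

theorem substE_id {x g} {E : EqSet} (h : ∀ e ∈ E, ¬ OccE x e) : substE (single x g) E = E := by
  have : ∀ e ∈ E, (Trm.subst (single x g) e.1, Trm.subst (single x g) e.2) = e := by
    intro e he
    have := h e he
    rw [subst_id _ fun hh => this (Or.inl hh), subst_id _ fun hh => this (Or.inr hh)]
  unfold substE
  rw [Set.image_congr this]; simp

theorem reach_elim {x g} {E : EqSet} (hn : (Trm.var x, g) ∉ E) (hg : ¬ Trm.Occurs x g) :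
    Reachable (insert (Trm.var x, g) E) (insert (Trm.var x, g) (substE (single x g) E)) := by
  have hE : insert (Trm.var x, g) E \ {(Trm.var x, g)} = E := by
    ext e; simp; grind
  by_cases h : ∃ e ∈ E, OccE x e
  · refine .single ?_
    have := MMAStep.elim (E := insert (Trm.var x, g) E) (Set.mem_insert _ _) hg (by rwa [hE])
    rwa [hE, Set.singleton_union] at this
  · push Not at h
    rw [substE_id h]; exact .refl

theorem step_decomp {S : EqSet} {L f sl tl} (h : MInv S ((.fn f sl, .fn f tl) :: L))
    (hn : (Trm.fn f sl, Trm.fn f tl) ∉ L) (hl : sl.length = tl.length) :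
    Reachable (S ∪ {e | e ∈ (Trm.fn f sl, Trm.fn f tl) :: L}) (S ∪ {e | e ∈ sl.zip tl ++ L}) := by
  have hS : (Trm.fn f sl, Trm.fn f tl) ∉ S := by
    intro hm
    obtain ⟨x, t, he, -⟩ := h.1 _ hm
    simp at he
  refine .single ?_
  convert MMAStep.decomp (E := S ∪ {e | e ∈ (Trm.fn f sl, Trm.fn f tl) :: L}) (f := f) (sl := sl) (tl := tl) (by simp) hl using 1
  ext e; simp; grind

theorem step_flip {S : EqSet} {L t x} (h : MInv S ((t, .var x) :: L))
    (hn : (t, Trm.var x) ∉ L) (ht : ∀ y, t ≠ .var y) :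
    Reachable (S ∪ {e | e ∈ (t, Trm.var x) :: L}) (insert (Trm.var x, t) (S ∪ {e | e ∈ L})) := by
  have hS : (t, Trm.var x) ∉ S := by
    intro hm
    obtain ⟨x, t, he, -⟩ := h.1 _ hm
    simp at he
    exact ht _ he.1
  refine .single ?_
  convert MMAStep.flip (E := S ∪ {e | e ∈ (t, Trm.var x) :: L}) (t := t) (x := x) (by simp) ht using 1
  ext e; simp; grind

theorem substE_union {θ} {S T : EqSet} : substE θ (S ∪ T) = substE θ S ∪ substE θ T :=
  Set.image_union _ _ _

/-- general elimination step: `v` not in `r`, does not occur as solved variable. -/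
theorem MInv.elim {S : EqSet} {L : List (Trm × Trm)} {v : ℕ} {r : Trm} (h1 : ∀ e ∈ S, ∃ x t, e = (.var x, t) ∧ ¬ Trm.Occurs x t ∧
    (∀ e' ∈ S, e' ≠ e → ¬ OccE x e') ∧ (∀ e' ∈ L, ¬ OccE x e') ∧ x ≠ v ∧ ¬ Trm.Occurs x r)
    (hv : ¬ Trm.Occurs v r)
    {L' : List (Trm × Trm)}
    (hL' : L' = L.map fun e => (e.1.subst (single v r), e.2.subst (single v r)))
    (h2 : (∀ e ∈ L', ∀ e' ∈ L', ∀ x, Trm.Occurs x e.1 → ¬ Trm.Occurs x e'.2))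
    (h3 : ∀ e ∈ S, ∀ e' ∈ L', ∀ x, Trm.Occurs x e'.2 → ¬ OccE x e)
    (h4 : ∀ e' ∈ L', ∀ x, Trm.Occurs x e'.2 → ¬ Trm.Occurs x r) :
    MInv (insert (.var v, r) (substE (single v r) S)) L' := by
  have key : ∀ x e, OccE x (Trm.subst (single v r) e.1, Trm.subst (single v r) e.2) →
      (x ≠ v ∧ OccE x e) ∨ Trm.Occurs x r := by
    intro x e hx
    simp only [OccE, occ_subst] at hx ⊢
    grind
  have hvn : ∀ x (e : Trm × Trm), OccE x (Trm.subst (single v r) e.1, Trm.subst (single v r) e.2) → x ≠ v := by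
    rintro x e hx rfl
    rcases key _ _ hx with h | h
    · exact h.1 rfl
    · exact hv h
  refine ⟨?_, h2, ?_⟩
  · intro e he
    rcases he with rfl | ⟨e, he, rfl⟩
    · refine ⟨v, r, rfl, hv, ?_, ?_⟩
      · rintro e' (rfl | ⟨e', he', rfl⟩) hne ho
        · exact hne rfl
        · exact hvn _ _ ho rfl
      · intro e' he' ho
        rw [hL', List.mem_map] at he'
        obtain ⟨d, hd, rfl⟩ := he'
        exact hvn _ _ ho rfl
    · obtain ⟨x, t, rfl, ht, hS, hL, hxv, hxr⟩ := h1 e he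
      refine ⟨x, t.subst (single v r), ?_, ?_, ?_, ?_⟩
      · simp [Trm.subst, single, hxv]
      · rw [occ_subst]; tauto
      · rintro e' (rfl | ⟨e', he', rfl⟩) hne ho
        · rcases ho with ho | ho
          · rw [occ_var] at ho; exact hxv ho
          · exact hxr ho
        · have hne' : e' ≠ (Trm.var x, t) := by rintro rfl; exact hne rfl
          rcases key _ _ ho with ho | ho
          · exact hS e' he' hne' ho.2
          · exact hxr ho
      · intro e' he' ho
        rw [hL', List.mem_map] at he'
        obtain ⟨d, hd, rfl⟩ := he'
        rcases key _ _ ho with ho | ho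
        · exact hL d hd ho.2
        · exact hxr ho
  · rintro e (rfl | ⟨e, he, rfl⟩) e' he' x hx ho
    · rcases ho with ho | ho
      · rw [occ_var] at ho; subst ho
        rw [hL', List.mem_map] at he'
        obtain ⟨d, hd, rfl⟩ := he'
        exact hvn x d (Or.inr hx) rfl
      · exact h4 e' he' x hx ho
    · rcases key _ _ ho with ho | ho
      · exact h3 e he e' he' x hx ho.2
      · exact h4 e' he' x hx ho

theorem substE_list {θ} {L : List (Trm × Trm)} :
    substE θ {e | e ∈ L} = {e | e ∈ L.map fun e => (e.1.subst θ, e.2.subst θ)} := by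
  ext e; simp [substE]

def szL (l : List Trm) : ℕ := (l.map Trm.size).sum

theorem szL_sub {l l' : List Trm} (h : l.Sublist l') : szL l ≤ szL l' :=
  (h.map _).sum_le_sum (by simp)

theorem mem_var_solved {S L v t} (h : MInv S L) (hv : ∃ e ∈ L, OccE v e) :
    (Trm.var v, t) ∉ S := by
  intro hm
  obtain ⟨x, t, he, -, -, hL⟩ := h.1 _ hm
  simp at he
  obtain ⟨e, he', ho⟩ := hv
  rw [he.1] at ho
  exact hL e he' ho

theorem phase2 (n : ℕ) : ∀ (S : EqSet) (L : List (Trm × Trm)), szL (L.map Prod.snd) ≤ n →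
    MInv S L → (∀ x, countL x (L.map Prod.snd) ≤ 1) → WNSTO (S ∪ {e | e ∈ L}) := by
  classical
  induction n with
  | zero =>
    intro S L hn hI hc
    cases L with
    | nil => exact wnsto_nil hI
    | cons a L => have := size_pos a.2; simp [szL] at hn; omega
  | succ n ih =>
    intro S L0 hn hI hc
    cases L0 with
    | nil => exact wnsto_nil hI
    | cons a L0 =>
    obtain ⟨L, hL⟩ : ∃ L, L = L0.filter (· ≠ a) := ⟨_, rfl⟩
    have hsub : L.Sublist L0 := hL ▸ List.filter_sublist
    have hna : a ∉ L := by simp [hL]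
    have hset : S ∪ {e | e ∈ a :: L0} = S ∪ {e | e ∈ a :: L} := by
      ext e; simp [hL]; tauto
    rw [hset]
    replace hI : MInv S (a :: L) := hI.sub fun e he => by
      simp only [List.mem_cons] at he ⊢; exact he.imp_right (hsub.mem ·)
    have hsub' := ((hsub.cons_cons a).map Prod.snd)
    replace hn := (szL_sub hsub').trans hn
    replace hc := fun x => (countL_sub hsub').trans (hc x)
    clear hset hsub' hsub hL L0
    simp only [List.map_cons, countL_cons] at hc
    simp only [List.map_cons, szL, List.sum_cons] at hn
    change _ + szL _ ≤ _ at hn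
    have hlin : ∀ x, Trm.Occurs x a.2 → ∀ e ∈ L, ¬ Trm.Occurs x e.2 := by
      intro x hx e he ho
      have h1 : a.2.count x ≠ 0 := fun h => (count_zero _).1 h hx
      have h2 : countL x (L.map Prod.snd) ≠ 0 := fun h =>
        countL_zero.1 h e.2 (List.mem_map_of_mem he) ho
      have := hc x
      omega
    have hapos := size_pos a.2
    obtain ⟨l, r⟩ := a
    cases l with
    | var v =>
      have hvr : ∀ e ∈ (Trm.var v, r) :: L, ¬ Trm.Occurs v e.2 := fun e he =>
        hI.2.1 _ List.mem_cons_self e he v .var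
      have hvr0 : ¬ Trm.Occurs v r := hvr _ List.mem_cons_self
      have hmS : (Trm.var v, r) ∉ S := mem_var_solved hI ⟨_, List.mem_cons_self, Or.inl .var⟩
      have hre := reach_elim (x := v) (g := r) (E := S ∪ {e | e ∈ L}) (by simp [hmS, hna]) hvr0
      have hs : insert (Trm.var v, r) (S ∪ {e | e ∈ L}) = S ∪ {e | e ∈ (Trm.var v, r) :: L} := by
        ext e; simp; tauto
      rw [hs] at hre
      refine WNSTO.back hre ?_
      rw [substE_union, substE_list, ← Set.insert_union]
      have hsnd : (L.map fun e => (e.1.subst (single v r), e.2.subst (single v r))).map Prod.snd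
          = L.map Prod.snd := by
        rw [List.map_map]
        refine List.map_congr_left fun e he => ?_
        exact subst_id _ (hvr e (List.mem_cons_of_mem _ he))
      have hmem : ∀ e ∈ (L.map fun e => (e.1.subst (single v r), e.2.subst (single v r))),
          ∃ d ∈ L, e = (d.1.subst (single v r), d.2) := by
        intro e he
        rw [List.mem_map] at he
        obtain ⟨d, hd, rfl⟩ := he
        exact ⟨d, hd, by rw [subst_id d.2 (hvr d (List.mem_cons_of_mem _ hd))]⟩
      refine ih _ _ ?_ (MInv.elim (L := L) ?_ hvr0 rfl ?_ ?_ ?_) ?_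
      · rw [hsnd]; omega
      · intro e he
        obtain ⟨x, t, rfl, ht, hS, hL⟩ := hI.1 e he
        have hh := hL _ List.mem_cons_self
        refine ⟨x, t, rfl, ht, hS, fun e' he' => hL e' (List.mem_cons_of_mem _ he'), ?_, ?_⟩
        · rintro rfl; exact hh (Or.inl .var)
        · exact fun h => hh (Or.inr h)
      · intro e he e' he' x hx hx'
        obtain ⟨d, hd, rfl⟩ := hmem e he
        obtain ⟨d', hd', rfl⟩ := hmem e' he'
        simp only [occ_subst] at hx hx'
        rcases hx with hx | hx
        · exact hI.2.1 d (List.mem_cons_of_mem _ hd) d' (List.mem_cons_of_mem _ hd') x hx.2 hx'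
        · exact hlin x hx.2 d' hd' hx'
      · intro e he e' he' x hx
        obtain ⟨d', hd', rfl⟩ := hmem e' he'
        exact hI.2.2 e he d' (List.mem_cons_of_mem _ hd') x hx
      · intro e' he' x hx hr
        obtain ⟨d', hd', rfl⟩ := hmem e' he'
        exact hlin x hr d' hd' hx
      · intro x
        rw [hsnd]; have := hc x; omega
    | fn f sl =>
      cases r with
      | var w =>
        refine WNSTO.back (step_flip hI hna (by simp)) ?_
        rw [← Set.insert_union]
        have hwl : ∀ e ∈ (Trm.fn f sl, Trm.var w) :: L, ¬ Trm.Occurs w e.1 := fun e he ho =>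
          hI.2.1 e he _ List.mem_cons_self w ho .var
        have hwL : ∀ e ∈ L, ¬ OccE w e := by
          rintro e he (ho | ho)
          · exact hwl e (List.mem_cons_of_mem _ he) ho
          · exact hlin w .var e he ho
        have hwS : ∀ e ∈ S, ¬ OccE w e := fun e he =>
          hI.2.2 e he _ List.mem_cons_self w .var
        refine ih _ _ (by omega) ⟨?_, ?_, ?_⟩ ?_
        · rintro e (rfl | he)
          · refine ⟨w, _, rfl, hwl _ List.mem_cons_self, ?_, hwL⟩
            rintro e' (rfl | he') hne
            · exact absurd rfl hne
            · exact hwS e' he'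
          · obtain ⟨x, t, rfl, ht, hS, hL⟩ := hI.1 e he
            have hh := hL _ List.mem_cons_self
            refine ⟨x, t, rfl, ht, ?_, fun e' he' => hL e' (List.mem_cons_of_mem _ he')⟩
            rintro e' (rfl | he') hne
            · exact fun h => hh h.symm
            · exact hS e' he' hne
        · exact fun e he e' he' => hI.2.1 e (List.mem_cons_of_mem _ he) e' (List.mem_cons_of_mem _ he')
        · rintro e (rfl | he) e' he' x hx
          · rintro (ho | ho)
            · rw [occ_var] at ho; subst ho
              exact hlin x .var e' he' hx
            · exact hI.2.1 _ List.mem_cons_self e' (List.mem_cons_of_mem _ he') x ho hx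
          · exact hI.2.2 e he e' (List.mem_cons_of_mem _ he') x hx
        · intro x; have := hc x; omega
      | fn g tl =>
        by_cases hcl : f ≠ g ∨ sl.length ≠ tl.length
        · exact ⟨_, .refl, Or.inl ⟨f, sl, g, tl, by simp, hcl⟩⟩
        push Not at hcl
        obtain ⟨rfl, hlen⟩ := hcl
        refine WNSTO.back (step_decomp hI hna hlen) ?_
        have hz : (sl.zip tl ++ L).map Prod.snd = tl ++ L.map Prod.snd := by
          rw [List.map_append, List.map_snd_zip hlen.ge]
        refine ih _ _ ?_ hI.decomp ?_
        · rw [hz]; simp only [size_fn] at hn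
          simp only [szL, List.map_append, List.sum_append] at hn ⊢; omega
        · intro x
          have := hc x
          rw [hz, countL_append, ← count_fn x f tl]; exact this

theorem phase1 (n : ℕ) : ∀ (S : EqSet) (L1 L2 : List (Trm × Trm)), szL (L1.map Prod.fst) ≤ n →
    MInv S (L1 ++ L2) → (∀ e ∈ L1, Ground e.1) →
    (∀ x, 2 ≤ countL x ((L1 ++ L2).map Prod.snd) → ∃ e ∈ L1, Trm.Occurs x e.2) →
    WNSTO (S ∪ {e | e ∈ L1 ++ L2}) := by
  classical
  have base : ∀ (S : EqSet) (L2 : List (Trm × Trm)), MInv S ([] ++ L2) →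
    (∀ x, 2 ≤ countL x (([] ++ L2).map Prod.snd) → ∃ e ∈ ([] : List (Trm × Trm)), Trm.Occurs x e.2) →
    WNSTO (S ∪ {e | e ∈ [] ++ L2}) := by
    intro S L2 hI hc
    refine phase2 _ S _ le_rfl hI fun x => ?_
    by_contra hcon
    obtain ⟨e, he, -⟩ := hc x (by omega)
    simp at he
  induction n with
  | zero =>
    intro S L1 L2 hn hI hg hc
    cases L1 with
    | nil => exact base S L2 hI hc
    | cons a L => have := size_pos a.1; simp [szL] at hn; omega
  | succ n ih =>
    intro S M1 M2 hn hI hg hc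
    cases M1 with
    | nil => exact base S M2 hI hc
    | cons a M1 =>
    obtain ⟨L1, hL1⟩ : ∃ L, L = M1.filter (· ≠ a) := ⟨_, rfl⟩
    obtain ⟨L2, hL2⟩ : ∃ L, L = M2.filter (· ≠ a) := ⟨_, rfl⟩
    have hsub1 : L1.Sublist M1 := hL1 ▸ List.filter_sublist
    have hsub2 : L2.Sublist M2 := hL2 ▸ List.filter_sublist
    have hna : a ∉ L1 ++ L2 := by simp [hL1, hL2]
    have hset : S ∪ {e | e ∈ (a :: M1) ++ M2} = S ∪ {e | e ∈ a :: (L1 ++ L2)} := by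
      ext e; simp [hL1, hL2]; tauto
    rw [hset]
    have hsubA : (a :: (L1 ++ L2)).Sublist (a :: M1 ++ M2) :=
      (hsub1.append hsub2).cons_cons a
    replace hI : MInv S (a :: (L1 ++ L2)) := hI.sub fun e he => hsubA.mem he
    replace hn := (szL_sub ((hsub1.cons_cons a).map Prod.fst)).trans hn
    replace hc : ∀ x, 2 ≤ countL x ((a :: (L1 ++ L2)).map Prod.snd) →
        ∃ e ∈ a :: L1, Trm.Occurs x e.2 := by
      intro x hx
      obtain ⟨e, he, ho⟩ := hc x (hx.trans (countL_sub (hsubA.map Prod.snd)))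
      refine ⟨e, ?_, ho⟩
      simp only [List.mem_cons, hL1, List.mem_filter] at he ⊢
      by_cases h : e = a
      · exact Or.inl h
      · exact Or.inr ⟨he.resolve_left h, by simpa using h⟩
    have hga : Ground a.1 := hg a List.mem_cons_self
    replace hg : ∀ e ∈ L1, Ground e.1 := fun e he => hg e (List.mem_cons_of_mem _ (hsub1.mem he))
    clear hset hsubA hsub1 hsub2 hL1 hL2 M1 M2
    simp only [List.map_cons, countL_cons] at hc
    simp only [List.map_cons, szL, List.sum_cons] at hn
    change _ + szL _ ≤ _ at hn
    have hapos := size_pos a.1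
    obtain ⟨l, r⟩ := a
    cases l with
    | var v => exact absurd .var (hga v)
    | fn f sl =>
      cases r with
      | var w =>
        refine WNSTO.back (step_flip hI hna (by simp)) ?_
        have hwl : ∀ e ∈ (Trm.fn f sl, Trm.var w) :: (L1 ++ L2), ¬ Trm.Occurs w e.1 :=
          fun e he ho => hI.2.1 e he _ List.mem_cons_self w ho .var
        have hwS : ∀ e ∈ S, ¬ OccE w e := fun e he =>
          hI.2.2 e he _ List.mem_cons_self w .var
        generalize hgdef : Trm.fn f sl = g at *
        have hwg := hga w
        have hre := reach_elim (x := w) (g := g) (E := S ∪ {e | e ∈ L1 ++ L2}) (by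
          rintro (hm | hm)
          · exact hwS _ hm (Or.inl .var)
          · exact hwl _ (List.mem_cons_of_mem _ hm) .var) hwg
        refine WNSTO.back hre ?_
        rw [substE_union, substE_list, ← Set.insert_union]
        have hmem : ∀ e ∈ ((L1 ++ L2).map fun e => (e.1.subst (single w g), e.2.subst (single w g))),
            ∃ d ∈ L1 ++ L2, e = (d.1, d.2.subst (single w g)) := by
          intro e he
          rw [List.mem_map] at he
          obtain ⟨d, hd, rfl⟩ := he
          exact ⟨d, hd, by rw [subst_id d.1 (hwl d (List.mem_cons_of_mem _ hd))]⟩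
        have hI' := MInv.elim (S := S) (L := L1 ++ L2) (v := w) (r := g) (by
            intro e he
            obtain ⟨x, t, rfl, ht, hS, hL⟩ := hI.1 e he
            refine ⟨x, t, rfl, ht, hS, fun e' he' => hL e' (List.mem_cons_of_mem _ he'), ?_, hga x⟩
            rintro rfl; exact hL _ List.mem_cons_self (Or.inr .var)) hwg rfl (by
            intro e he e' he' x hx hx'
            obtain ⟨d, hd, rfl⟩ := hmem e he
            obtain ⟨d', hd', rfl⟩ := hmem e' he'
            simp only [occ_subst] at hx hx'
            rcases hx' with hx' | hx'
            · exact hI.2.1 d (List.mem_cons_of_mem _ hd) d' (List.mem_cons_of_mem _ hd') x hx hx'.2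
            · exact hga x hx'.2) (by
            intro e he e' he' x hx
            obtain ⟨d', hd', rfl⟩ := hmem e' he'
            simp only [occ_subst] at hx
            rcases hx with hx | hx
            · exact hI.2.2 e he d' (List.mem_cons_of_mem _ hd') x hx.2
            · exact absurd hx.2 (hga x)) (fun _ _ x _ => hga x)
        rw [List.map_append] at hI' ⊢
        refine ih _ _ _ ?_ hI' ?_ ?_
        · have : (L1.map fun e => (e.1.subst (single w g), e.2.subst (single w g))).map Prod.fst
              = L1.map Prod.fst := by
            rw [List.map_map]
            refine List.map_congr_left fun e he => ?_
            exact subst_id _ (hwl e (by simp [he]))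
          rw [this]; omega
        · intro e he
          rw [List.mem_map] at he
          obtain ⟨d, hd, rfl⟩ := he
          intro x hx
          simp only [occ_subst] at hx
          rcases hx with hx | hx
          · exact hg d hd x hx.2
          · exact hga x hx.2
        · intro x hx
          rw [← List.map_append, List.map_map] at hx
          have hxw : x ≠ w := by
            rintro rfl
            have : countL x ((L1 ++ L2).map (Prod.snd ∘ fun e : Trm × Trm => (e.1.subst (single x g), e.2.subst (single x g)))) = 0 := by
              rw [countL_zero]
              intro t ht
              rw [List.mem_map] at ht
              obtain ⟨d, hd, rfl⟩ := ht
              simp only [Function.comp, occ_subst]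
              have := hga x
              tauto
            omega
          have hle : countL x ((L1 ++ L2).map (Prod.snd ∘ fun e : Trm × Trm => (e.1.subst (single w g), e.2.subst (single w g)))) ≤ countL x ((L1 ++ L2).map Prod.snd) := by
            have := countL_map_le (y := x) (ts := (L1 ++ L2).map Prod.snd) (φ := Trm.subst (single w g))
              (fun t _ => count_subst_le hga t)
            rw [List.map_map] at this
            exact this
          obtain ⟨e, he, ho⟩ := hc x (by omega)
          rcases List.mem_cons.1 he with rfl | he
          · exact absurd (occ_var.1 ho) hxw
          · exact ⟨_, List.mem_map_of_mem he, (occ_subst _).2 (Or.inl ⟨hxw, ho⟩)⟩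
      | fn g tl =>
        by_cases hcl : f ≠ g ∨ sl.length ≠ tl.length
        · exact ⟨_, .refl, Or.inl ⟨f, sl, g, tl, by simp, hcl⟩⟩
        push Not at hcl
        obtain ⟨rfl, hlen⟩ := hcl
        refine WNSTO.back (step_decomp hI hna hlen) ?_
        have hI' := hI.decomp
        rw [← List.append_assoc] at hI' ⊢
        refine ih _ _ _ ?_ hI' ?_ ?_
        · rw [List.map_append, List.map_fst_zip hlen.le]
          simp only [size_fn] at hn
          simp only [szL, List.map_append, List.sum_append] at hn ⊢; omega
        · intro e he x hx
          rcases List.mem_append.1 he with he | he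
          · exact hga x (.fn (List.of_mem_zip (a := e.1) (b := e.2) he).1 hx)
          · exact hg e he x hx
        · intro x hx
          have hz : (sl.zip tl ++ L1 ++ L2).map Prod.snd = tl ++ (L1 ++ L2).map Prod.snd := by
            rw [List.append_assoc, List.map_append, List.map_snd_zip hlen.ge]
          rw [hz, countL_append, ← count_fn x f tl] at hx
          obtain ⟨e, he, ho⟩ := hc x hx
          rcases List.mem_cons.1 he with rfl | he
          · obtain ⟨u, hu, ho⟩ := occ_fn.1 ho
            have : u ∈ (sl.zip tl).map Prod.snd := by rwa [List.map_snd_zip hlen.ge]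
            obtain ⟨d, hd, rfl⟩ := List.mem_map.1 this
            exact ⟨d, List.mem_append_left _ hd, ho⟩
          · exact ⟨e, List.mem_append_right _ he, ho⟩

/-- Let `A = p(s; t)` and `H = p(s′; t′)` be moded atoms with the same predicate
symbol (so `s, s′` have equal lengths and `t, t′` have equal lengths), such
that `Var(A) ∩ Var(H) = ∅`, every term of the input tuple `s` is ground, and
`H` is weakly linear: every variable with more than one occurrence in `H`
occurs in an input position of `H` (i.e. occurs in `s′`).  Then the equation
set `(s ≐̈ s′) ∪ (t ≐̈ t′)` is WNSTO. -/
theorem stmt11 (s t s' t' : List Trm)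
    (hlen_in : s.length = s'.length) (hlen_out : t.length = t'.length)
    (hdisj : varsL (s ++ t) ∩ varsL (s' ++ t') = ∅)
    (hground : ∀ u ∈ s, Ground u)
    (hweaklin : ∀ x, 2 ≤ countL x (s' ++ t') → x ∈ varsL s') :
    WNSTO (zipEqs s s' ∪ zipEqs t t') := by
  have hE : zipEqs s s' ∪ zipEqs t t' = (∅ : EqSet) ∪ {e | e ∈ s.zip s' ++ t.zip t'} := by
    ext e; simp [zipEqs]
  rw [hE]
  have hL : ∀ e ∈ s.zip s' ++ t.zip t', e.1 ∈ s ++ t ∧ e.2 ∈ s' ++ t' := by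
    intro e he
    simp only [List.mem_append] at he ⊢
    rcases he with he | he
    · have := List.of_mem_zip (a := e.1) (b := e.2) he; tauto
    · have := List.of_mem_zip (a := e.1) (b := e.2) he; tauto
  refine phase1 _ ∅ _ _ le_rfl ⟨by simp, ?_, by simp⟩ ?_ ?_
  · intro e he e' he' x hx hx'
    have : x ∈ varsL (s ++ t) ∩ varsL (s' ++ t') :=
      ⟨⟨_, (hL e he).1, hx⟩, ⟨_, (hL e' he').2, hx'⟩⟩
    rw [hdisj] at this
    exact this
  · intro e he
    exact hground _ (List.of_mem_zip (a := e.1) (b := e.2) he).1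
  · intro x hx
    rw [List.map_append, List.map_snd_zip hlen_in.ge, List.map_snd_zip hlen_out.ge] at hx
    obtain ⟨u, hu, ho⟩ := hweaklin x hx
    have : u ∈ (s.zip s').map Prod.snd := by rwa [List.map_snd_zip hlen_in.ge]
    obtain ⟨d, hd, rfl⟩ := List.mem_map.1 this
    exact ⟨d, hd, ho⟩
end

section
/- Let P be a program all of whose clauses are tidy and let Q0 be a tidy query. Consider any sequence Q0, Q1, Q2, … in which each Q_{k+1} is an SLD-resolvent of Q_k with a renamed variant of a clause of P that is variable disjoint from Q_k (with an arbitrary atom of Q_k selected at each step). Then every query Q_k in such a sequence is tidy, and for every atom A of any Q_k and every clause H ← B of P renamed so as to be variable disjoint from Q_k, if A and H have the same predicate symbol then the equation set pairing the corresponding argument terms of A and H is NSTO; that is, a tidy program with a tidy query is occur-check free under any selection rule. -/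
/-- A moded atom `p(s; t)`: a predicate symbol `p` together with the tuple
`s` of terms filling its input positions and the tuple `t` of terms filling
its output positions. -/
structure Atom where
  pred : ℕ
  inp : List Trm
  out : List Trm

/-- The variables of an atom. -/
def Atom.vars (A : Atom) : Set ℕ := varsL (A.inp ++ A.out)

/-- A query: a finite sequence of moded atoms. -/
abbrev Query := List Atom

/-- The variables of a query. -/
def queryVars (Q : Query) : Set ℕ := {x | ∃ A ∈ Q, x ∈ A.vars}

/-- A query is output linear: the combined tuple of all terms filling output
positions of its atoms is linear. -/
def OutputLinear (Q : Query) : Prop :=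
  ∀ x, (Q.map (fun A => countL x A.out)).sum ≤ 1

/-- An atom is input linear: the tuple of terms filling its input positions
is linear. -/
def InputLinear (A : Atom) : Prop := ∀ x, countL x A.inp ≤ 1

/-- `Ai →_Q Aj` : some variable occurs both in an output position of `Ai`
and in an input position of `Aj` (a relation on the atom positions of `Q`). -/
def qrel (Q : Query) (i j : Fin Q.length) : Prop :=
  ∃ x, x ∈ varsL (Q.get i).out ∧ x ∈ varsL (Q.get j).inp

/-- A query `Q` is tidy: it is output linear and `→_Q` is acyclic
(no `Ai →_Q⁺ Ai`). -/
def TidyQ (Q : Query) : Prop :=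
  OutputLinear Q ∧ ∀ i, ¬ Relation.TransGen (qrel Q) i i

/-- A clause `H ← B`: a head atom and a body query. -/
structure Clause where
  head : Atom
  body : Query

/-- The variables of a clause. -/
def clauseVars (C : Clause) : Set ℕ := C.head.vars ∪ queryVars C.body

/-- A clause `H ← Q` is tidy: `Q` is tidy, `H` is input linear, and no
variable occurring in an input position of `H` occurs in an output position
of `Q`. -/
def TidyC (C : Clause) : Prop :=
  TidyQ C.body ∧ InputLinear C.head ∧
    ∀ x ∈ varsL C.head.inp, ∀ A ∈ C.body, x ∉ varsL A.out

/-- Application of a substitution to a moded atom. -/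
def Atom.subst (σ : ℕ → Trm) (A : Atom) : Atom :=
  ⟨A.pred, A.inp.map (Trm.subst σ), A.out.map (Trm.subst σ)⟩

/-- Application of a substitution to a query. -/
def Query.subst (σ : ℕ → Trm) (Q : Query) : Query := Q.map (Atom.subst σ)

/-- The equation set pairing the corresponding argument terms of two atoms
(with the same predicate symbol). -/
def atomEqs (A H : Atom) : EqSet :=
  zipEqs (A.inp ++ A.out) (H.inp ++ H.out)

/-- The SLD-resolvent of the query `Q`, with selected atom at position `i`,
and the clause `C`, via the mgu `θ`:
`(A1,…,Ai−1, B, Ai+1,…,An)θ`. -/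
def Resolvent (Q : Query) (i : ℕ) (C : Clause) (θ : ℕ → Trm) : Query :=
  Query.subst θ (Q.take i ++ C.body ++ Q.drop (i + 1))

/-- Renaming a clause by a permutation of the variables (a renamed variant). -/
def Clause.rename (ρ : ℕ ≃ ℕ) (C : Clause) : Clause :=
  ⟨Atom.subst (fun x => .var (ρ x)) C.head, Query.subst (fun x => .var (ρ x)) C.body⟩

/-- One SLD-derivation step with respect to the program `P` (an arbitrary
atom of the query is selected): `Q'` is an SLD-resolvent of `Q` and a
renamed variant, variable disjoint from `Q`, of a clause of `P`. -/
def Deriv (P : Set Clause) (Q Q' : Query) : Prop :=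
  ∃ C ∈ P, ∃ ρ : ℕ ≃ ℕ,
    clauseVars (Clause.rename ρ C) ∩ queryVars Q = ∅ ∧
    ∃ i : ℕ, ∃ hi : i < Q.length, ∃ θ : ℕ → Trm,
      (Q.get ⟨i, hi⟩).pred = (Clause.rename ρ C).head.pred ∧
      (Q.get ⟨i, hi⟩).inp.length = (Clause.rename ρ C).head.inp.length ∧
      (Q.get ⟨i, hi⟩).out.length = (Clause.rename ρ C).head.out.length ∧
      IsMgu θ (atomEqs (Q.get ⟨i, hi⟩) (Clause.rename ρ C).head) ∧
      Q' = Resolvent Q i (Clause.rename ρ C) θ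

namespace TidyProof

theorem tind {P : Trm → Prop} (hv : ∀ x, P (.var x))
    (hf : ∀ f ts, (∀ t ∈ ts, P t) → P (.fn f ts)) : ∀ t, P t
  | .var x => hv x
  | .fn f ts => hf f ts (fun t ht => tind hv hf t)
decreasing_by
  have := List.sizeOf_lt_of_mem ht
  simp [Trm.fn.sizeOf_spec]; omega

theorem subst_var (σ : ℕ → Trm) (x) : Trm.subst σ (.var x) = σ x := by
  rw [Trm.subst]

theorem subst_fn (σ : ℕ → Trm) (f ts) :
    Trm.subst σ (.fn f ts) = .fn f (ts.map (Trm.subst σ)) := by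
  rw [Trm.subst]; simp

theorem count_var (x y) : Trm.count x (.var y) = if y = x then 1 else 0 := by
  rw [Trm.count]

theorem count_fn (x f ts) : Trm.count x (.fn f ts) = countL x ts := by
  rw [Trm.count]; simp [countL]

theorem size_fn (f ts) : Trm.size (.fn f ts) = 1 + (ts.map Trm.size).sum := by
  rw [Trm.size]; simp

theorem size_pos (t : Trm) : 0 < t.size := by
  cases t
  · simp [Trm.size]
  · rw [size_fn]; omega

theorem occ_var {x y} : Trm.Occurs x (.var y) ↔ x = y := by
  constructor
  · intro h; cases h; rfl
  · rintro rfl; exact .var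

theorem occ_fn {x f ts} : Trm.Occurs x (.fn f ts) ↔ ∃ t ∈ ts, Trm.Occurs x t := by
  constructor
  · intro h; cases h with | fn a b => exact ⟨_, a, b⟩
  · rintro ⟨t, a, b⟩; exact .fn a b

theorem occ_fn' {x f ts} : Trm.Occurs x (.fn f ts) ↔ x ∈ varsL ts := occ_fn

theorem sum_pos_iff {α : Type} (l : List α) (g : α → ℕ) :
    0 < (l.map g).sum ↔ ∃ a ∈ l, 0 < g a := by
  induction l with
  | nil => simp
  | cons a l ih => simp only [List.map_cons, List.sum_cons, List.mem_cons]
                   constructor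
                   · intro h
                     by_cases h1 : 0 < g a
                     · exact ⟨a, Or.inl rfl, h1⟩
                     · obtain ⟨b, hb, hb'⟩ := ih.1 (by omega)
                       exact ⟨b, Or.inr hb, hb'⟩
                   · rintro ⟨b, rfl | hb, hb'⟩
                     · omega
                     · have := ih.2 ⟨b, hb, hb'⟩; omega

theorem occ_count {x} : ∀ t, Trm.Occurs x t ↔ 0 < Trm.count x t := by
  refine tind ?_ ?_
  · intro y; rw [occ_var, count_var]; split <;> simp <;> omega
  · intro f ts ih
    rw [occ_fn, count_fn, countL, sum_pos_iff]
    constructor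
    · rintro ⟨t, a, b⟩; exact ⟨t, a, (ih t a).1 b⟩
    · rintro ⟨t, a, b⟩; exact ⟨t, a, (ih t a).2 b⟩

theorem varsL_count {x l} : x ∈ varsL l ↔ 0 < countL x l := by
  rw [← occ_fn' (f := 0), occ_count, count_fn]

theorem occ_subst {σ : ℕ → Trm} {y} : ∀ t, Trm.Occurs y (Trm.subst σ t) ↔
    ∃ x, Trm.Occurs x t ∧ Trm.Occurs y (σ x) := by
  refine tind ?_ ?_
  · intro x; rw [subst_var]; simp [occ_var]
  · intro f ts ih
    rw [subst_fn, occ_fn]; simp only [occ_fn, List.mem_map]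
    constructor
    · rintro ⟨_, ⟨t, a, rfl⟩, b⟩
      obtain ⟨x, h1, h2⟩ := (ih t a).1 b
      exact ⟨x, ⟨t, a, h1⟩, h2⟩
    · rintro ⟨x, ⟨t, a, h1⟩, h2⟩
      exact ⟨_, ⟨t, a, rfl⟩, (ih t a).2 ⟨x, h1, h2⟩⟩

theorem subst_congr {σ τ : ℕ → Trm} : ∀ t, (∀ x, Trm.Occurs x t → σ x = τ x) →
    Trm.subst σ t = Trm.subst τ t := by
  refine tind ?_ ?_
  · intro x h; simp only [subst_var]; exact h x .var
  · intro f ts ih h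
    simp only [subst_fn]
    congr 1
    exact List.map_congr_left fun t ht => ih t ht fun x hx => h x (.fn ht hx)

theorem subst_congr_inv {σ τ : ℕ → Trm} : ∀ t, Trm.subst σ t = Trm.subst τ t → 
    (∀ x, Trm.Occurs x t → σ x = τ x) := by
  refine tind ?_ ?_
  · intro x h y hy; simp only [subst_var] at h; rw [occ_var] at hy; rw [hy, h]
  · intro f ts ih h x hx
    simp only [subst_fn] at h
    rw [occ_fn] at hx
    obtain ⟨t, ht, hx⟩ := hx
    injection h with _ h
    exact ih t ht (List.map_inj_left.1 h t ht) x hx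

theorem subst_id : ∀ t, Trm.subst Trm.var t = t := by
  refine tind ?_ ?_
  · intro x; rw [subst_var]
  · intro f ts ih; rw [subst_fn]; congr 1
    conv_rhs => rw [← List.map_id ts]
    exact List.map_congr_left fun t ht => ih t ht

theorem subst_comp (σ τ : ℕ → Trm) : ∀ t, Trm.subst τ (Trm.subst σ t) =
    Trm.subst (fun x => Trm.subst τ (σ x)) t := by
  refine tind ?_ ?_
  · intro x; simp only [subst_var]
  · intro f ts ih; simp only [subst_fn, List.map_map]; congr 1
    exact List.map_congr_left fun t ht => ih t ht

theorem sum_lin {α : Type} (l : List α) (f g h : α → ℕ) (c : ℕ) (H : ∀ a ∈ l, f a = g a + h a * c) :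
    (l.map f).sum = (l.map g).sum + (l.map h).sum * c := by
  induction l with
  | nil => simp
  | cons a l ih =>
    simp only [List.map_cons, List.sum_cons]
    rw [ih (fun b hb => H b (List.mem_cons_of_mem _ hb)), H a List.mem_cons_self]; ring

theorem count_single {X u x} : ∀ t, Trm.count x (Trm.subst (single X u) t) =
    (if x = X then 0 else Trm.count x t) + Trm.count X t * Trm.count x u := by
  refine tind ?_ ?_
  · intro y; simp only [subst_var, single, count_var]
    split
    · subst_vars; split <;> simp; omega
    · simp only [count_var]; split <;> split <;> simp <;> omega
  · intro f ts ih
    simp only [subst_fn, count_fn, countL, List.map_map]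
    refine (sum_lin ts _ _ _ _ ih).trans ?_
    congr 1
    split <;> simp

theorem count_ren {ρ ρ' : ℕ → Trm} {w z} (hz : ρ' w = .var z) : ∀ t,
    (∀ a, Trm.Occurs a t → ∃ b, ρ a = .var b ∧ ρ' b = .var a) →
    Trm.count w (Trm.subst ρ t) ≤ Trm.count z t := by
  refine tind ?_ ?_
  · intro a h
    obtain ⟨b, h1, h2⟩ := h a .var
    rw [subst_var, h1, count_var, count_var]
    split
    · subst_vars; rw [hz] at h2; injection h2 with h2; simp [h2]
    · omega
  · intro f ts ih h
    simp only [subst_fn, count_fn, countL, List.map_map]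
    apply List.sum_le_sum
    intro t ht
    exact ih t ht fun a ha => h a (.fn ht ha)

abbrev Pr := Trm × Trm

def sP (σ : ℕ → Trm) (p : Pr) : Pr := (p.1.subst σ, p.2.subst σ)
def cL (x : ℕ) (l : List Pr) : ℕ := (l.map (fun p => p.1.count x)).sum
def Lin (l : List Pr) : Prop := ∀ x, cL x l ≤ 1
def RkBy (r : ℕ → ℕ) (l : List Pr) : Prop :=
  ∀ p ∈ l, ∀ x y, Trm.Occurs x p.2 → Trm.Occurs y p.1 → r x < r y
def Inv (l : List Pr) : Prop := Lin l ∧ ∃ r, RkBy r l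

theorem cL_cons (x p l) : cL x (p :: l) = p.1.count x + cL x l := by simp [cL]
theorem cL_append (x l m) : cL x (l ++ m) = cL x l + cL x m := by simp [cL]
theorem cL_pos {x l} : 0 < cL x l ↔ ∃ p ∈ l, Trm.Occurs x p.1 := by
  rw [cL, sum_pos_iff]; simp only [occ_count]

theorem Inv.perm {l m} (h : Inv l) (p : l.Perm m) : Inv m := by
  refine ⟨fun x => ?_, ?_⟩
  · have := h.1 x
    rw [cL] at *
    rwa [← (p.map _).sum_eq]
  · obtain ⟨r, hr⟩ := h.2
    exact ⟨r, fun q hq => hr q (p.mem_iff.2 hq)⟩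

theorem Inv.tail {p l} (h : Inv (p :: l)) : Inv l := by
  refine ⟨fun x => ?_, ?_⟩
  · have := h.1 x
    rw [cL_cons] at this; omega
  · obtain ⟨r, hr⟩ := h.2
    exact ⟨r, fun q hq => hr q (List.mem_cons_of_mem _ hq)⟩

theorem Inv.left {l m} (h : Inv (l ++ m)) : Inv l := by
  refine ⟨fun x => ?_, ?_⟩
  · have := h.1 x
    rw [cL_append] at this; omega
  · obtain ⟨r, hr⟩ := h.2
    exact ⟨r, fun q hq => hr q (List.mem_append_left _ hq)⟩

theorem zip_fst_count (x) (us ss : List Trm) (hl : us.length = ss.length) :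
    cL x (us.zip ss) = countL x us := by
  rw [cL, countL]
  conv_rhs => rw [← List.map_fst_zip (l₁ := us) (l₂ := ss) (by omega)]
  simp [Function.comp_def]

theorem Inv.decomp {f g us ss l} (h : Inv ((Trm.fn f us, Trm.fn g ss) :: l))
    (hl : us.length = ss.length) : Inv (us.zip ss ++ l) := by
  refine ⟨fun x => ?_, ?_⟩
  · have := h.1 x
    rw [cL_cons, count_fn] at this
    rw [cL_append, zip_fst_count _ _ _ hl]; exact this
  · obtain ⟨r, hr⟩ := h.2
    refine ⟨r, fun q hq x y hx hy => ?_⟩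
    rcases List.mem_append.1 hq with hq | hq
    · obtain ⟨h1, h2⟩ := List.of_mem_zip (a := q.1) (b := q.2) hq
      exact hr _ List.mem_cons_self x y (.fn h2 hx) (.fn h1 hy)
    · exact hr q (List.mem_cons_of_mem _ hq) x y hx hy

theorem cL_single {X u x} (l) : cL x (l.map (sP (single X u))) =
    (if x = X then 0 else cL x l) + cL X l * Trm.count x u := by
  simp only [cL, List.map_map]
  rw [sum_lin l _ (fun p => if x = X then 0 else p.1.count x) (fun p => p.1.count X) (u.count x)]
  · congr 1; split <;> simp
  · intro p _; exact count_single p.1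

theorem occ_single {X u y t} (h : Trm.Occurs y (Trm.subst (single X u) t)) :
    (Trm.Occurs y t ∧ y ≠ X) ∨ (Trm.Occurs X t ∧ Trm.Occurs y u) := by
  obtain ⟨x, h1, h2⟩ := (occ_subst t).1 h
  rw [single] at h2
  split at h2
  · subst_vars; exact Or.inr ⟨h1, h2⟩
  · rw [occ_var] at h2; subst h2; exact Or.inl ⟨h1, by assumption⟩

theorem Inv.notOcc1 {X t l} (h : Inv ((Trm.var X, t) :: l)) : ¬ Trm.Occurs X t := by
  obtain ⟨r, hr⟩ := h.2
  intro h; exact lt_irrefl _ (hr _ List.mem_cons_self X X h .var)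

theorem Inv.notOcc2 {X t l} (h : Inv ((t, Trm.var X) :: l)) : ¬ Trm.Occurs X t := by
  obtain ⟨r, hr⟩ := h.2
  intro h; exact lt_irrefl _ (hr _ List.mem_cons_self X X .var h)

theorem Inv.elim1 {X t l} (h : Inv ((Trm.var X, t) :: l)) :
    Inv ((Trm.var X, t) :: l.map (sP (single X t))) := by
  have hn : Trm.count X t = 0 := by
    have := h.notOcc1; rw [occ_count] at this; omega
  have hX : cL X l = 0 := by
    have := h.1 X; rw [cL_cons] at this; simp [count_var] at this; omega
  refine ⟨fun x => ?_, ?_⟩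
  · have := h.1 x
    rw [cL_cons, cL_single, hX]
    rw [cL_cons] at this
    simp only [] at *
    split <;> omega
  · obtain ⟨r, hr⟩ := h.2
    refine ⟨r, fun q hq x y hx hy => ?_⟩
    rcases List.mem_cons.1 hq with rfl | hq
    · exact hr _ List.mem_cons_self x y hx hy
    · obtain ⟨p, hp, rfl⟩ := List.mem_map.1 hq
      have hp' := hr p (List.mem_cons_of_mem _ hp)
      have h0 := hr _ List.mem_cons_self
      rcases occ_single hy with ⟨hy, _⟩ | ⟨hy, _⟩
      · rcases occ_single hx with ⟨hx, _⟩ | ⟨hx, hx'⟩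
        · exact hp' x y hx hy
        · exact lt_trans (h0 x X hx' .var) (hp' X y hx hy)
      · have := cL_pos.2 ⟨p, hp, hy⟩; omega

open Classical in
theorem Inv.elim2 {X t l} (h : Inv ((t, Trm.var X) :: l)) :
    Inv ((Trm.var X, t) :: l.map (sP (single X t))) := by
  have hno := h.notOcc2
  have hn : Trm.count X t = 0 := by
    have := h.notOcc2; rw [occ_count] at this; omega
  refine ⟨fun x => ?_, ?_⟩
  · have h1 := h.1 x
    have h2 := h.1 X
    rw [cL_cons, cL_single]
    rw [cL_cons] at h1 h2
    simp only [count_var] at *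
    have : cL X l * t.count x ≤ 1 * t.count x := Nat.mul_le_mul_right _ (by omega)
    split
    · subst_vars; simp [hn]
    · rw [if_neg (by tauto)]; omega
  · obtain ⟨r, hr⟩ := h.2
    have h0 := hr _ List.mem_cons_self
    refine ⟨fun z => if z = X then r X + 1 else if Trm.Occurs z t then r X else r z,
      fun q hq x y hx hy => ?_⟩
    rcases List.mem_cons.1 hq with rfl | hq
    · rw [occ_var] at hy; subst hy
      have : x ≠ y := by rintro rfl; exact hno hx
      simp only [] at hx
      simp [this, hx]
    · obtain ⟨p, hp, rfl⟩ := List.mem_map.1 hq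
      have hp' := hr p (List.mem_cons_of_mem _ hp)
      have hy2 : ∃ z, Trm.Occurs z p.1 ∧
          (if y = X then r X + 1 else if Trm.Occurs y t then r X else r y) = r z := by
        rcases occ_single hy with ⟨hy, hyX⟩ | ⟨hy, hyt⟩
        · refine ⟨y, hy, ?_⟩
          have : ¬ Trm.Occurs y t := by
            intro h3
            have h1 := h.1 y
            rw [cL_cons] at h1
            have := cL_pos.2 ⟨p, hp, hy⟩
            have := (occ_count _).1 h3
            simp only [] at h1
            omega
          simp [hyX, this]
        · refine ⟨X, hy, ?_⟩
          have : y ≠ X := by rintro rfl; exact hno hyt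
          simp [this, hyt]
      obtain ⟨z, hz, hz'⟩ := hy2
      simp only []
      rw [hz']
      rcases occ_single hx with ⟨hx, hxX⟩ | ⟨hx, hxt⟩
      · have := hp' x z hx hz
        rw [if_neg hxX]
        split
        · have := h0 X x .var (by assumption); omega
        · exact this
      · have : x ≠ X := by rintro rfl; exact hno hxt
        rw [if_neg this, if_pos hxt]
        exact hp' X z hx hz

theorem Inv.ren {ρ ρ' : ℕ → Trm} {l : List Pr} (h : Inv l)
    (hρ : ∀ p ∈ l, ∀ a, Trm.Occurs a p.1 ∨ Trm.Occurs a p.2 → ∃ b, ρ a = .var b ∧ ρ' b = .var a) :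
    Inv (l.map (sP ρ)) := by
  refine ⟨fun w => ?_, ?_⟩
  · by_cases h0 : 0 < cL w (l.map (sP ρ))
    · obtain ⟨q, hq, hw⟩ := cL_pos.1 h0
      obtain ⟨p, hp, rfl⟩ := List.mem_map.1 hq
      obtain ⟨z, hz, hzw⟩ := (occ_subst _).1 hw
      obtain ⟨b, hb, hb'⟩ := hρ p hp z (Or.inl hz)
      rw [hb, occ_var] at hzw; subst hzw
      refine le_trans ?_ (h.1 z)
      rw [cL, List.map_map]
      apply List.sum_le_sum
      intro p hp
      exact count_ren hb' p.1 fun a ha => hρ p hp a (Or.inl ha)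
    · omega
  · obtain ⟨r, hr⟩ := h.2
    refine ⟨fun w => match ρ' w with | .var z => r z | _ => 0, ?_⟩
    intro q hq x y hx hy
    obtain ⟨p, hp, rfl⟩ := List.mem_map.1 hq
    obtain ⟨z, hz, hzx⟩ := (occ_subst _).1 hx
    obtain ⟨z', hz', hzy⟩ := (occ_subst _).1 hy
    obtain ⟨b, hb, hb'⟩ := hρ p hp z (Or.inr hz)
    obtain ⟨c, hc, hc'⟩ := hρ p hp z' (Or.inl hz')
    rw [hb, occ_var] at hzx; subst hzx
    rw [hc, occ_var] at hzy; subst hzy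
    simp only [hb', hc']
    exact hr p hp z z' hz hz'

-- NSTO part

def Good (E : EqSet) : Prop := ∃ l1 l2 : List Pr, Inv (l1 ++ l2.map Prod.swap) ∧
  ∀ e ∈ E, e ∈ l1 ∨ e ∈ l2

theorem Good.cases {E : EqSet} (h : Good E) {e} (he : e ∈ E) : ∃ l1 l2 : List Pr,
    (Inv (e :: (l1 ++ l2.map Prod.swap)) ∨ Inv (e.swap :: (l1 ++ l2.map Prod.swap))) ∧
    ∀ e' ∈ E \ {e}, e' ∈ l1 ∨ e' ∈ l2 := by
  obtain ⟨l1, l2, hI, hE⟩ := h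
  rcases hE e he with h | h
  · obtain ⟨m, hm⟩ : ∃ m, l1.Perm (e :: m) := by
      classical exact ⟨_, List.perm_cons_erase h⟩
    refine ⟨m, l2, Or.inl (hI.perm (hm.append_right _)), ?_⟩
    rintro e' ⟨h1, h2⟩
    rcases hE e' h1 with h3 | h3
    · rw [hm.mem_iff] at h3
      rcases List.mem_cons.1 h3 with h3 | h3
      · exact absurd h3 h2
      · exact Or.inl h3
    · exact Or.inr h3
  · obtain ⟨m, hm⟩ : ∃ m, l2.Perm (e :: m) := by
      classical exact ⟨_, List.perm_cons_erase h⟩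
    refine ⟨l1, m, Or.inr (hI.perm (((hm.map _).append_left _).trans ?_)), ?_⟩
    · simp
    rintro e' ⟨h1, h2⟩
    rcases hE e' h1 with h3 | h3
    · exact Or.inl h3
    · rw [hm.mem_iff] at h3
      rcases List.mem_cons.1 h3 with h3 | h3
      · exact absurd h3 h2
      · exact Or.inr h3

theorem Good.not_occ {E} (h : Good E) : ¬ OccApp E := by
  rintro ⟨x, t, he, ho, _⟩
  obtain ⟨l1, l2, h | h, -⟩ := h.cases he
  · exact h.notOcc1 ho
  · exact h.notOcc2 ho

theorem Good.step {E F} (h : Good E) (hs : MMAStep E F) : Good F := by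
  cases hs with
  | @decomp f sl tl he hl =>
    obtain ⟨l1, l2, h | h, hE⟩ := h.cases he
    · have := h.decomp hl
      refine ⟨sl.zip tl ++ l1, l2, by simpa using this, ?_⟩
      rintro e (h1 | h1)
      · rcases hE e h1 with h | h <;> simp [h]
      · left; simp only [Set.mem_ofPred_eq] at h1; simp [h1]
    · have := Inv.decomp (us := tl) (ss := sl) h hl.symm
      refine ⟨l1, sl.zip tl ++ l2, ?_, ?_⟩
      · simp only [List.map_append, List.zip_swap]
        refine this.perm ?_
        rw [← List.append_assoc, ← List.append_assoc]
        exact List.perm_append_comm.append_right _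
      rintro e (h1 | h1)
      · rcases hE e h1 with h | h <;> simp [h]
      · right; simp only [Set.mem_ofPred_eq] at h1; simp [h1]
  | @delete x he =>
    obtain ⟨l1, l2, h, hE⟩ := h.cases he
    exact ⟨l1, l2, by rcases h with h | h <;> exact h.tail, hE⟩
  | @flip t x he hv =>
    obtain ⟨l1, l2, h | h, hE⟩ := h.cases he
    · refine ⟨l1, (Trm.var x, t) :: l2, h.perm List.perm_middle.symm, ?_⟩
      rintro e (h1 | h1)
      · rcases hE e h1 with h | h <;> simp [h]
      · right; simp_all
    · refine ⟨(Trm.var x, t) :: l1, l2, by simpa using h, ?_⟩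
      rintro e (h1 | h1)
      · rcases hE e h1 with h | h <;> simp [h]
      · left; simp_all
  | @elim x t he hn hex =>
    obtain ⟨l1, l2, h, hE⟩ := h.cases he
    have h : Inv ((Trm.var x, t) :: (l1 ++ l2.map Prod.swap).map (sP (single x t))) := by
      rcases h with h | h
      · exact h.elim1
      · exact Inv.elim2 h
    refine ⟨(Trm.var x, t) :: l1.map (sP (single x t)), l2.map (sP (single x t)), ?_, ?_⟩
    · have e : (l2.map Prod.swap).map (sP (single x t)) =
          (l2.map (sP (single x t))).map Prod.swap := by
        simp only [List.map_map]; rfl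
      simpa [e] using h
    · rintro e (h1 | ⟨e', he', rfl⟩)
      · left; simp_all
      · rcases hE e' he' with h | h
        · left; exact List.mem_cons_of_mem _ (List.mem_map.2 ⟨e', h, rfl⟩)
        · right; exact (List.mem_map.2 ⟨e', h, rfl⟩)

theorem Good.nsto {E} (h : Good E) : NSTO E := by
  intro F hF
  have : Good F := by
    induction hF with
    | refl => exact h
    | tail _ hs ih => exact ih.step hs
  exact this.not_occ

-- unification part

def SolL (σ : ℕ → Trm) (E : List Pr) : Prop := ∀ p ∈ E, p.1.subst σ = p.2.subst σ
def MguL (θ : ℕ → Trm) (E : List Pr) : Prop :=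
  SolL θ E ∧ ∀ σ, SolL σ E → ∃ ρ, ∀ x, σ x = Trm.subst ρ (θ x)
def ms (τ : ℕ → Trm) (E : List Pr) : ℕ := (E.map (fun p => (p.1.subst τ).size)).sum

theorem map_eq_zip (σ : ℕ → Trm) : ∀ (us ss : List Trm), us.length = ss.length →
    (us.map (Trm.subst σ) = ss.map (Trm.subst σ) ↔ SolL σ (us.zip ss))
  | [], [], _ => by simp [SolL]
  | u :: us, s :: ss, h => by
    have := map_eq_zip σ us ss (by simpa using h)
    simp only [List.map_cons, List.cons.injEq, this, List.zip_cons_cons, SolL, List.forall_mem_cons]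

theorem sol_fn {σ f us ss l} (h : us.length = ss.length) :
    SolL σ ((Trm.fn f us, Trm.fn f ss) :: l) ↔ SolL σ (us.zip ss ++ l) := by
  have := map_eq_zip σ us ss h
  simp only [SolL, List.forall_mem_cons, List.forall_mem_append, subst_fn, Trm.fn.injEq, true_and] at *
  rw [this]

theorem single_absorb {σ : ℕ → Trm} {X t} (h : σ X = t.subst σ) (s : Trm) :
    (s.subst (single X t)).subst σ = s.subst σ := by
  rw [subst_comp]
  apply subst_congr
  intro x _
  rw [single]; split
  · subst_vars; exact h.symm
  · rw [subst_var]

theorem sol_single {σ : ℕ → Trm} {X t} (h : σ X = t.subst σ) (l : List Pr) :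
    SolL σ (l.map (sP (single X t))) ↔ SolL σ l := by
  simp only [SolL, List.forall_mem_map, sP, single_absorb h]

theorem mgu_elim {X t} {E : List Pr} {θ} (hn : ¬ Trm.Occurs X t)
    (h : MguL θ (E.map (sP (single X t)))) :
    MguL (fun x => (single X t x).subst θ) ((Trm.var X, t) :: E) := by
  have hX : (single X t X).subst θ = t.subst (fun x => (single X t x).subst θ) := by
    simp only [single, if_true]
    apply subst_congr
    intro x hx
    have : x ≠ X := by rintro rfl; exact hn hx
    simp [this, subst_var]
  refine ⟨?_, ?_⟩
  · intro p hp
    rcases List.mem_cons.1 hp with rfl | hp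
    · rw [subst_var]; exact hX
    · rw [← subst_comp, ← subst_comp]
      exact h.1 _ (List.mem_map.2 ⟨p, hp, rfl⟩)
  · intro σ hσ
    have h1 : σ X = t.subst σ := by
      have := hσ _ List.mem_cons_self
      rwa [subst_var] at this
    obtain ⟨ρ, hρ⟩ := h.2 σ ((sol_single h1 E).2 fun p hp => hσ p (List.mem_cons_of_mem _ hp))
    refine ⟨ρ, fun x => ?_⟩
    rw [subst_comp]
    rw [← subst_congr (σ := σ) _ (fun x _ => hρ x)]
    have := single_absorb h1 (.var x)
    rw [subst_var, subst_var] at this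
    exact this.symm

theorem sP_comp (σ τ : ℕ → Trm) (l : List Pr) : (l.map (sP σ)).map (sP τ) =
    l.map (sP (fun x => (σ x).subst τ)) := by
  simp only [List.map_map]
  apply List.map_congr_left
  intro p _
  simp [sP, subst_comp]

theorem zip_ms (τ) (us ss : List Trm) (hl : us.length = ss.length) :
    ms τ (us.zip ss) = ((us.map (Trm.subst τ)).map Trm.size).sum := by
  rw [ms]
  conv_rhs => rw [← List.map_fst_zip (l₁ := us) (l₂ := ss) (by omega)]
  simp [Function.comp_def]

theorem ms_single {σ : ℕ → Trm} {X t} (h : σ X = t.subst σ) (l : List Pr) :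
    ms σ (l.map (sP (single X t))) = ms σ l := by
  simp only [ms, List.map_map, Function.comp_def, sP, single_absorb h]

theorem ms_cons (σ p l) : ms σ (p :: l) = (p.1.subst σ).size + ms σ l := by simp [ms]
theorem ms_append (σ m l) : ms σ (m ++ l) = ms σ m + ms σ l := by simp [ms]

theorem unify (τ : ℕ → Trm) (n : ℕ) : ∀ E G : List Pr, ms τ E ≤ n → SolL τ E → Inv (E ++ G) →
    ∃ θ, MguL θ E ∧ Inv (G.map (sP θ)) := by
  induction n with
  | zero =>
    intro E G hn hs hI
    cases E with
    | nil =>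
      refine ⟨Trm.var, ⟨by simp [SolL], fun σ _ => ⟨σ, fun x => (subst_var _ _).symm⟩⟩, ?_⟩
      have : G.map (sP Trm.var) = G := by
        conv_rhs => rw [← List.map_id G]
        exact List.map_congr_left fun p _ => by simp [sP, subst_id]
      rw [this]; exact hI
    | cons p E => rw [ms_cons] at hn; have := size_pos (p.1.subst τ); omega
  | succ n ih =>
    intro E G hn hs hI
    cases E with
    | nil => exact ih [] G (by simp [ms]) (by simp [SolL]) hI
    | cons p E =>
      have key : ∀ X t, τ X = t.subst τ → Inv ((Trm.var X, t) :: (E ++ G).map (sP (single X t))) →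
          ∃ θ, MguL θ ((Trm.var X, t) :: E) ∧ Inv (G.map (sP θ)) := by
        intro X t h1 h2
        obtain ⟨θ, h3, h4⟩ := ih (E.map (sP (single X t))) (G.map (sP (single X t)))
          (by rw [ms_single h1]; rw [ms_cons] at hn; have := size_pos (p.1.subst τ); omega)
          ((sol_single h1 E).2 fun q hq => hs q (List.mem_cons_of_mem _ hq))
          (by have := h2.tail; rwa [List.map_append] at this)
        refine ⟨_, mgu_elim h2.notOcc1 h3, ?_⟩
        rwa [sP_comp] at h4
      obtain ⟨a, b⟩ := p
      have h0 := hs _ List.mem_cons_self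
      simp only [] at h0
      cases a with
      | var X => 
        rw [subst_var] at h0
        exact key X b h0 (Inv.elim1 hI)
      | fn f us =>
        cases b with
        | var X =>
          rw [subst_var] at h0
          obtain ⟨θ, h1, h2⟩ := key X _ h0.symm (Inv.elim2 hI)
          have sw : ∀ σ, SolL σ ((Trm.fn f us, Trm.var X) :: E) ↔
            SolL σ ((Trm.var X, Trm.fn f us) :: E) := by
              intro σ; simp only [SolL, List.forall_mem_cons]; rw [eq_comm]
          exact ⟨θ, ⟨(sw _).2 h1.1, fun σ hσ => h1.2 σ ((sw _).1 hσ)⟩, h2⟩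
        | fn g ss =>
          simp only [subst_fn] at h0
          injection h0 with h3 h4
          subst h3
          have hl : us.length = ss.length := by
            have := congrArg List.length h4; simpa using this
          obtain ⟨θ, h1, h2⟩ := ih (us.zip ss ++ E) G
            (by rw [ms_append, zip_ms _ _ _ hl]; rw [ms_cons, subst_fn, size_fn] at hn; omega)
            ((sol_fn hl).1 hs) (by have := Inv.decomp hI hl; simpa using this)
          exact ⟨θ, ⟨(sol_fn hl).2 h1.1, fun σ hσ => h1.2 σ ((sol_fn hl).1 hσ)⟩, h2⟩

theorem unify' {θ : ℕ → Trm} {E G : List Pr} (h : MguL θ E) (hI : Inv (E ++ G)) :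
    Inv (G.map (sP θ)) := by
  obtain ⟨θ0, h1, h2⟩ := unify θ _ E G le_rfl h.1 hI
  obtain ⟨ρ, hρ⟩ := h1.2 θ h.1
  obtain ⟨ρ', hρ'⟩ := h.2 θ0 h1.1
  have : G.map (sP θ) = (G.map (sP θ0)).map (sP ρ) := by
    rw [sP_comp]
    rw [← funext hρ]
  rw [this]
  have hz : ∀ x z, Trm.Occurs z (θ0 x) → ∃ b, ρ z = .var b ∧ ρ' b = .var z := by
    intro x z hzx
    have h3 : Trm.subst (fun x => (ρ x).subst ρ') (θ0 x) = Trm.subst Trm.var (θ0 x) := by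
      rw [← subst_comp, ← hρ x, ← hρ' x, subst_id]
    have h4 := subst_congr_inv _ h3 z hzx
    change (ρ z).subst ρ' = Trm.var z at h4
    cases hb : ρ z with
    | var b => rw [hb, subst_var] at h4; exact ⟨b, rfl, h4⟩
    | fn f ts => rw [hb, subst_fn] at h4; cases h4
  refine h2.ren (ρ' := ρ') ?_
  intro q hq a ha
  obtain ⟨p, hp, rfl⟩ := List.mem_map.1 hq
  rcases ha with ha | ha <;> obtain ⟨x, _, hx⟩ := (occ_subst _).1 ha <;> exact hz x a hx

-- queries

def pr (A : Atom) : Pr := (.fn 0 A.out, .fn 0 A.inp)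

theorem pr_subst (σ) (A : Atom) : pr (A.subst σ) = sP σ (pr A) := by
  simp [pr, Atom.subst, sP, subst_fn]

theorem pr_query (σ) (Q : Query) : (Query.subst σ Q).map pr = (Q.map pr).map (sP σ) := by
  simp [Query.subst, pr_subst, Function.comp_def]

theorem cL_pr (x) (Q : Query) : cL x (Q.map pr) = (Q.map (fun A => countL x A.out)).sum := by
  simp [cL, pr, count_fn, Function.comp_def]

theorem tidy_of_inv {Q : Query} (h : Inv (Q.map pr)) : TidyQ Q := by
  refine ⟨fun x => ?_, ?_⟩
  · have := h.1 x; rwa [cL_pr] at this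
  · obtain ⟨r, hr⟩ := h.2
    have hr' : ∀ i : Fin Q.length, ∀ x y, x ∈ varsL (Q.get i).inp → y ∈ varsL (Q.get i).out → r x < r y := by
      intro i x y hx hy
      exact hr (pr (Q.get i)) (List.mem_map.2 ⟨_, List.get_mem _ _, rfl⟩) x y (occ_fn'.2 hx) (occ_fn'.2 hy)
    have key : ∀ i j, Relation.TransGen (qrel Q) i j → ∃ x, x ∈ varsL (Q.get i).out ∧
        ∀ y ∈ varsL (Q.get j).out, r x < r y := by
      intro i j hij
      induction hij with
      | single h =>
        obtain ⟨x, h1, h2⟩ := h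
        exact ⟨x, h1, fun y hy => hr' _ x y h2 hy⟩
      | tail _ h ih =>
        obtain ⟨x, h1, h2⟩ := ih
        obtain ⟨z, h3, h4⟩ := h
        exact ⟨x, h1, fun y hy => lt_trans (h2 z h3) (hr' _ z y h4 hy)⟩
    intro i hi
    obtain ⟨x, h1, h2⟩ := key i i hi
    exact lt_irrefl _ (h2 x h1)

theorem sum_two {α : Type} (g : α → ℕ) : ∀ (l : List α) (i j : Fin l.length), i < j →
    g (l.get i) + g (l.get j) ≤ (l.map g).sum := by
  intro l
  induction l with
  | nil => intro i; exact i.elim0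
  | cons a l ih =>
    intro i j hij
    obtain ⟨j', rfl⟩ : ∃ j', j = Fin.succ j' := Fin.exists_succ_eq.2 (by rintro rfl; exact absurd hij (Fin.not_lt_zero _)) |>.imp fun _ h => h.symm
    simp only [List.map_cons, List.sum_cons]
    induction i using Fin.cases with
    | zero =>
      have : g (l.get j') ≤ (l.map g).sum :=
        List.le_sum_of_mem (List.mem_map.2 ⟨_, List.get_mem _ _, rfl⟩)
      simpa using this
    | succ i' =>
      have := ih i' j' (by simpa using hij)
      simp only [List.get_cons_succ'] at *
      omega

open Classical in
theorem inv_of_tidy {Q : Query} (h : TidyQ Q) : Lin (Q.map pr) ∧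
    ∃ r N, RkBy r (Q.map pr) ∧ ∀ x, r x ≤ N := by
  refine ⟨fun x => by rw [cL_pr]; exact h.1 x, ?_⟩
  have uniq : ∀ i j x, x ∈ varsL (Q.get i).out → x ∈ varsL (Q.get j).out → i = j := by
    intro i j x hi hj
    rw [varsL_count] at hi hj
    have h1 := h.1 x
    rcases lt_trichotomy i j with h2 | h2 | h2
    · have := sum_two (fun A : Atom => countL x A.out) Q i j h2; omega
    · exact h2
    · have := sum_two (fun A : Atom => countL x A.out) Q j i h2; omega
  let anc : Fin Q.length → Finset (Fin Q.length) := fun i =>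
    Finset.univ.filter fun j => Relation.TransGen (qrel Q) j i
  let r : ℕ → ℕ := fun x => if hx : ∃ i : Fin Q.length, x ∈ varsL (Q.get i).out then
    1 + (anc hx.choose).card else 0
  have hr : ∀ i x, x ∈ varsL (Q.get i).out → r x = 1 + (anc i).card := by
    intro i x hi
    have hx : ∃ i : Fin Q.length, x ∈ varsL (Q.get i).out := ⟨i, hi⟩
    simp only [r, dif_pos hx]
    rw [uniq _ _ _ hx.choose_spec hi]
  refine ⟨r, 1 + Q.length, ?_, ?_⟩
  · intro p hp x y hx hy
    obtain ⟨A, hA, rfl⟩ := List.mem_map.1 hp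
    obtain ⟨i, rfl⟩ := List.get_of_mem hA
    rw [pr, occ_fn'] at hx hy
    rw [hr i y hy]
    by_cases hx' : ∃ j : Fin Q.length, x ∈ varsL (Q.get j).out
    · obtain ⟨j, hj⟩ := hx'
      rw [hr j x hj]
      have hji : qrel Q j i := ⟨x, hj, hx⟩
      have : anc j ⊂ anc i := by
        rw [Finset.ssubset_iff_of_subset]
        · exact ⟨j, by simpa [anc] using .single hji, by simpa [anc] using h.2 j⟩
        · intro k hk
          simp only [anc, Finset.mem_filter, Finset.mem_univ, true_and] at *
          exact hk.tail hji
      have := Finset.card_lt_card this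
      omega
    · simp only [r, dif_neg hx']; omega
  · intro x
    simp only [r]
    split
    · rename_i hx
      have := Finset.card_le_univ (anc hx.choose)
      simp at this
      omega
    · omega

theorem inv_of_tidy' {Q : Query} (h : TidyQ Q) : Inv (Q.map pr) := by
  obtain ⟨h1, r, N, h2, _⟩ := inv_of_tidy h
  exact ⟨h1, r, h2⟩

theorem tidy_rename {C : Clause} (h : TidyC C) (ρ : ℕ ≃ ℕ) : TidyC (Clause.rename ρ C) := by
  obtain ⟨h1, h2, h3⟩ := h
  have hocc : ∀ (l : List Trm) x, x ∈ varsL (l.map (Trm.subst fun x => .var (ρ x))) →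
      ρ.symm x ∈ varsL l := by
    intro l x hx
    rw [← occ_fn' (f := 0), ← subst_fn, occ_subst] at hx
    obtain ⟨a, ha, hb⟩ := hx
    rw [occ_var] at hb
    subst hb
    simpa using occ_fn'.1 ha
  refine ⟨?_, ?_, ?_⟩
  · apply tidy_of_inv
    rw [Clause.rename, pr_query]
    refine (inv_of_tidy' h1).ren (ρ' := fun x => .var (ρ.symm x)) ?_
    intro p _ a _
    exact ⟨ρ a, rfl, by simp⟩
  · intro x
    refine le_trans ?_ (h2 (ρ.symm x))
    rw [← count_fn x 0, ← count_fn (ρ.symm x) 0, Clause.rename]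
    simp only [Atom.subst, ← subst_fn]
    exact count_ren (ρ' := fun x => .var (ρ.symm x)) rfl _ fun a _ => ⟨ρ a, rfl, by simp⟩
  · intro x hx A hA hxA
    simp only [Clause.rename, Query.subst, List.mem_map] at hA
    obtain ⟨B, hB, rfl⟩ := hA
    exact h3 _ (hocc _ _ hx) B hB (hocc _ _ hxA)

open Classical in
theorem start {Q1 Q2 : Query} {A : Atom} {C : Clause} (hQ : TidyQ (Q1 ++ A :: Q2)) (hC : TidyC C)
    (hd : clauseVars C ∩ queryVars (Q1 ++ A :: Q2) = ∅) :
    Inv ([(Trm.fn 0 C.head.inp, Trm.fn 0 A.inp), (Trm.fn 0 A.out, Trm.fn 0 C.head.out)] ++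
      (Q1 ++ C.body ++ Q2).map pr) := by
  obtain ⟨hL, rQ, NQ, hrQ, hNQ⟩ := inv_of_tidy hQ
  obtain ⟨hB, hH, hHB⟩ := hC
  obtain ⟨hLB, rB, NB, hrB, hNB⟩ := inv_of_tidy hB
  have dis : ∀ x, x ∈ clauseVars C → x ∈ queryVars (Q1 ++ A :: Q2) → False := by
    intro x h1 h2
    have : x ∈ clauseVars C ∩ queryVars (Q1 ++ A :: Q2) := ⟨h1, h2⟩
    rw [hd] at this; exact this
  have qv : ∀ B ∈ Q1 ++ A :: Q2, ∀ x, (x ∈ varsL B.inp ∨ x ∈ varsL B.out) →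
      x ∈ queryVars (Q1 ++ A :: Q2) := by
    rintro B hB x (⟨t, ht, h⟩ | ⟨t, ht, h⟩)
    · exact ⟨B, hB, t, List.mem_append_left _ ht, h⟩
    · exact ⟨B, hB, t, List.mem_append_right _ ht, h⟩
  have cvb : ∀ B ∈ C.body, ∀ x, (x ∈ varsL B.inp ∨ x ∈ varsL B.out) → x ∈ clauseVars C := by
    rintro B hB x (⟨t, ht, h⟩ | ⟨t, ht, h⟩)
    · exact Or.inr ⟨B, hB, t, List.mem_append_left _ ht, h⟩
    · exact Or.inr ⟨B, hB, t, List.mem_append_right _ ht, h⟩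
  have cvh : ∀ x, (x ∈ varsL C.head.inp ∨ x ∈ varsL C.head.out) → x ∈ clauseVars C := by
    rintro x (⟨t, ht, h⟩ | ⟨t, ht, h⟩)
    · exact Or.inl ⟨t, List.mem_append_left _ ht, h⟩
    · exact Or.inl ⟨t, List.mem_append_right _ ht, h⟩
  refine ⟨fun x => ?_, ?_⟩
  · have h1 := hL x
    have h2 := hLB x
    have h3 := hH x
    simp only [List.map_append, List.map_cons, cL_append, cL_cons, pr, count_fn] at *
    have h0 : cL x [] = 0 := rfl
    rw [h0]
    have hcq : ∀ Q' : Query, (∀ B ∈ Q', B ∈ Q1 ++ A :: Q2) → 0 < cL x (Q'.map pr) →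
        x ∈ queryVars (Q1 ++ A :: Q2) := by
      intro Q' hs hp
      obtain ⟨p, hp, hx⟩ := cL_pos.1 hp
      obtain ⟨B, hB, rfl⟩ := List.mem_map.1 hp
      exact qv B (hs B hB) x (Or.inr (occ_fn'.1 hx))
    have e1 : cL x (Q1.map pr) > 0 → x ∈ queryVars (Q1 ++ A :: Q2) :=
      hcq Q1 (fun B hB => by simp [hB])
    have e2 : cL x (Q2.map pr) > 0 → x ∈ queryVars (Q1 ++ A :: Q2) :=
      hcq Q2 (fun B hB => by simp [hB])
    have e3 : countL x A.out > 0 → x ∈ queryVars (Q1 ++ A :: Q2) :=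
      fun h => qv A (by simp) x (Or.inr (varsL_count.2 h))
    have e4 : cL x (C.body.map pr) > 0 → x ∈ clauseVars C ∧ countL x C.head.inp = 0 := by
      intro hp
      obtain ⟨p, hp, hx⟩ := cL_pos.1 hp
      obtain ⟨B, hB, rfl⟩ := List.mem_map.1 hp
      refine ⟨cvb B hB x (Or.inr (occ_fn'.1 hx)), ?_⟩
      by_contra h
      exact hHB x (varsL_count.2 (by omega)) B hB (occ_fn'.1 hx)
    have e5 : countL x C.head.inp > 0 → x ∈ clauseVars C :=
      fun h => cvh x (Or.inl (varsL_count.2 h))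
    by_cases hx : x ∈ queryVars (Q1 ++ A :: Q2)
    · have hx' : x ∉ clauseVars C := fun h => dis x h hx
      have : ¬ cL x (C.body.map pr) > 0 := fun h => hx' (e4 h).1
      have : ¬ countL x C.head.inp > 0 := fun h => hx' (e5 h)
      omega
    · have : ¬ cL x (Q1.map pr) > 0 := fun h => hx (e1 h)
      have : ¬ cL x (Q2.map pr) > 0 := fun h => hx (e2 h)
      have : ¬ countL x A.out > 0 := fun h => hx (e3 h)
      by_cases hb : cL x (C.body.map pr) > 0
      · have := (e4 hb).2; omega
      · omega
  · have hQr : ∀ B ∈ Q1 ++ A :: Q2, ∀ x y, x ∈ varsL B.inp → y ∈ varsL B.out → rQ x < rQ y := by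
      intro B hB x y hx hy
      exact hrQ _ (List.mem_map.2 ⟨B, hB, rfl⟩) x y (occ_fn'.2 hx) (occ_fn'.2 hy)
    have hA : A ∈ Q1 ++ A :: Q2 := by simp
    obtain ⟨a, ha1, ha2⟩ : ∃ a, (∀ x ∈ varsL A.inp, rQ x + 1 ≤ a) ∧
        ∀ y ∈ varsL A.out, a + 1 ≤ rQ y + 1 := by
      by_cases hne : ∃ y, y ∈ varsL A.out
      · obtain ⟨y0, hy0, hmin⟩ : ∃ y0 ∈ varsL A.out, ∀ y ∈ varsL A.out, rQ y0 ≤ rQ y := by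
          obtain ⟨m, hm, hm'⟩ := WellFounded.has_min (measure rQ).wf (varsL A.out) hne
          exact ⟨m, hm, fun y hy => not_lt.1 (hm' y hy)⟩
        exact ⟨rQ y0, fun x hx => hQr A hA x y0 hx hy0, fun y hy => Nat.succ_le_succ (hmin y hy)⟩
      · exact ⟨NQ + 1, fun x _ => Nat.succ_le_succ (hNQ x), fun y hy => absurd ⟨y, hy⟩ hne⟩
    let M := NB + 2
    let r : ℕ → ℕ := fun x => if x ∈ clauseVars C then M * a + 1 + rB x else M * (rQ x + 1)
    have rC : ∀ x, x ∈ clauseVars C → r x = M * a + 1 + rB x := fun x hx => if_pos hx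
    have rQ' : ∀ x, x ∈ queryVars (Q1 ++ A :: Q2) → r x = M * (rQ x + 1) :=
      fun x hx => if_neg fun h => dis x h hx
    refine ⟨r, ?_⟩
    intro p hp x y hx hy
    simp only [List.map_append, List.mem_append, List.mem_cons, List.mem_map, List.not_mem_nil,
      or_false] at hp
    have QQ : ∀ B ∈ Q1 ++ A :: Q2, ∀ x y, x ∈ varsL B.inp → y ∈ varsL B.out → r x < r y := by
      intro B hB x y hx hy
      rw [rQ' x (qv B hB x (Or.inl hx)), rQ' y (qv B hB y (Or.inr hy))]
      have := hQr B hB x y hx hy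
      exact Nat.mul_lt_mul_of_pos_left (by omega) (by omega)
    rcases hp with (rfl | rfl) | (⟨B, hB, rfl⟩ | ⟨B, hB, rfl⟩) | ⟨B, hB, rfl⟩
    · rw [occ_fn'] at hx hy
      rw [rQ' x (qv A hA x (Or.inl hx)), rC y (cvh y (Or.inl hy))]
      have := Nat.mul_le_mul_left M (ha1 x hx)
      omega
    · rw [occ_fn'] at hx hy
      rw [rQ' y (qv A hA y (Or.inr hy)), rC x (cvh x (Or.inr hx))]
      have := Nat.mul_le_mul_left M (ha2 y hy)
      have := hNB x
      have := Nat.mul_add M a 1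
      omega
    · exact QQ B (by simp [hB]) x y (occ_fn'.1 hx) (occ_fn'.1 hy)
    · rw [rC x (cvb B hB x (Or.inl (occ_fn'.1 hx))), rC y (cvb B hB y (Or.inr (occ_fn'.1 hy)))]
      have := hrB _ (List.mem_map.2 ⟨B, hB, rfl⟩) x y hx hy
      omega
    · exact QQ B (by simp [hB]) x y (occ_fn'.1 hx) (occ_fn'.1 hy)

theorem atom_nsto {Q : Query} {A : Atom} {C : Clause} (hQ : TidyQ Q) (hA : A ∈ Q) (hC : TidyC C)
    (hd : clauseVars C ∩ queryVars Q = ∅) (h1 : A.inp.length = C.head.inp.length)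
    (h2 : A.out.length = C.head.out.length) : NSTO (atomEqs A C.head) := by
  obtain ⟨Q1, Q2, rfl⟩ := List.append_of_mem hA
  have h := (start hQ hC hd).left
  have h := h.decomp h1.symm
  have h := Inv.decomp (h.perm List.perm_append_comm) h2
  apply Good.nsto
  refine ⟨A.out.zip C.head.out, A.inp.zip C.head.inp, by simpa [List.zip_swap] using h, ?_⟩
  intro e he
  change e ∈ List.zip _ _ at he
  rw [List.zip_append h1] at he
  exact (List.mem_append.1 he).symm

theorem deriv_tidy {P : Set Clause} (hP : ∀ C ∈ P, TidyC C) {Q Q'} (hQ : TidyQ Q)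
    (hD : Deriv P Q Q') : TidyQ Q' := by
  obtain ⟨C, hC, ρ, hd, i, hi, θ, -, h1, h2, hm, rfl⟩ := hD
  have hC := tidy_rename (hP C hC) ρ
  generalize Clause.rename ρ C = C' at *
  have e : Q = Q.take i ++ Q.get ⟨i, hi⟩ :: Q.drop (i + 1) := by simp
  generalize Q.get ⟨i, hi⟩ = A at *
  have h := start (by rwa [← e]) hC (by rwa [← e])
  apply tidy_of_inv
  rw [Resolvent, pr_query]
  refine unify' ?_ h
  have sw : ∀ σ, SolL σ [(Trm.fn 0 C'.head.inp, Trm.fn 0 A.inp), (Trm.fn 0 A.out, Trm.fn 0 C'.head.out)]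
      ↔ Solves σ (atomEqs A C'.head) := by
    intro σ
    have : Solves σ (atomEqs A C'.head) ↔ SolL σ ((A.inp ++ A.out).zip (C'.head.inp ++ C'.head.out)) :=
      Iff.rfl
    rw [this, ← map_eq_zip _ _ _ (by simp [h1, h2]), List.map_append, List.map_append]
    have ai : ∀ a b c d : List Trm, a.length = c.length → (a ++ b = c ++ d ↔ a = c ∧ b = d) :=
      fun a b c d h => ⟨fun h' => List.append_inj h' h, fun h' => by rw [h'.1, h'.2]⟩
    rw [ai _ _ _ _ (by simp [h1])]
    simp only [SolL, List.forall_mem_cons, subst_fn, Trm.fn.injEq, true_and]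
    simp [eq_comm]
  exact ⟨(sw _).2 hm.1, fun σ hσ => hm.2 σ ((sw _).1 hσ)⟩

end TidyProof

/-- Let `P` be a program all of whose clauses are tidy and let `Q0` be a tidy
query.  Then every query `Q` in any SLD-derivation from `Q0` (arbitrary atom
selected at each step, each step resolving with a renamed variant of a
clause of `P` that is variable disjoint from the current query) is tidy;
moreover, for every atom `A` of such a `Q` and every clause of `P` renamed
so as to be variable disjoint from `Q`, if `A` and the head `H` of the
renamed clause have the same predicate symbol then the equation set pairing
the corresponding argument terms of `A` and `H` is NSTO.  That is, a tidy
program with a tidy query is occur-check free under any selection rule. -/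
theorem stmt13 (P : Set Clause) (hP : ∀ C ∈ P, TidyC C)
    (Q0 : Query) (hQ0 : TidyQ Q0) :
    ∀ Q : Query, Relation.ReflTransGen (Deriv P) Q0 Q →
      TidyQ Q ∧
      ∀ A ∈ Q, ∀ C ∈ P, ∀ ρ : ℕ ≃ ℕ,
        clauseVars (Clause.rename ρ C) ∩ queryVars Q = ∅ →
        A.pred = (Clause.rename ρ C).head.pred →
        A.inp.length = (Clause.rename ρ C).head.inp.length →
        A.out.length = (Clause.rename ρ C).head.out.length →
        NSTO (atomEqs A (Clause.rename ρ C).head) := by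
  intro Q hQ
  have h : TidyQ Q := by
    induction hQ with
    | refl => exact hQ0
    | tail _ hs ih => exact TidyProof.deriv_tidy hP ih hs
  exact ⟨h, fun A hA C hC ρ hd _ h1 h2 =>
    TidyProof.atom_nsto h hA (TidyProof.tidy_rename (hP C hC) ρ) hd h1 h2⟩
end

section
/- Let Q be a well-3-moded query and C a well-3-moded clause that is variable disjoint from Q. Then every SLD-resolvent of Q and C is a well-3-moded query. -/
/-- A 3-moded atom `p(s; t; u)`: a predicate symbol together with the tuples
of terms filling its input (+), output (−) and neutral (⊥) positions. -/
structure Atom3 where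
  pred : ℕ
  inp : List Trm
  out : List Trm
  neu : List Trm

/-- A query: a finite sequence of atoms. -/
abbrev Query3 := List Atom3

/-- A query `B1,…,Bn` is well-3-moded if for each `j` every variable
occurring in an input position of `Bj` occurs in an output position of some
`Bi` with `i < j`. -/
def Well3Query (Q : Query3) : Prop :=
  ∀ (j : ℕ) (hj : j < Q.length), ∀ x ∈ varsL (Q.get ⟨j, hj⟩).inp,
    ∃ (i : ℕ) (hi : i < j), x ∈ varsL (Q.get ⟨i, by omega⟩).out

/-- A clause `H ← B`: a head atom and a body query. -/
structure Clause3 where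
  head : Atom3
  body : Query3

/-- A clause `H ← B1,…,Bn` is well-3-moded if every variable occurring in an
output position of `H` has a defining occurrence in the clause (an
occurrence in an input position of `H` or in an output position of some body
atom), and, for each `j`, every variable occurring in an input position of
`Bj` occurs in an input position of `H` or in an output position of some
`Bi` with `i < j`. -/
def Well3Clause (C : Clause3) : Prop :=
  (∀ x ∈ varsL C.head.out,
      x ∈ varsL C.head.inp ∨ ∃ B ∈ C.body, x ∈ varsL B.out) ∧
  (∀ (j : ℕ) (hj : j < C.body.length), ∀ x ∈ varsL (C.body.get ⟨j, hj⟩).inp,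
      x ∈ varsL C.head.inp ∨
        ∃ (i : ℕ) (hi : i < j), x ∈ varsL (C.body.get ⟨i, by omega⟩).out)

/-- The variables of a 3-moded atom. -/
def Atom3.vars (A : Atom3) : Set ℕ := varsL (A.inp ++ A.out ++ A.neu)

/-- The variables of a query. -/
def query3Vars (Q : Query3) : Set ℕ := {x | ∃ A ∈ Q, x ∈ A.vars}

/-- The variables of a clause. -/
def clause3Vars (C : Clause3) : Set ℕ := C.head.vars ∪ query3Vars C.body

/-- Application of a substitution to a 3-moded atom. -/
def Atom3.subst (σ : ℕ → Trm) (A : Atom3) : Atom3 :=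
  ⟨A.pred, A.inp.map (Trm.subst σ), A.out.map (Trm.subst σ),
    A.neu.map (Trm.subst σ)⟩

/-- Application of a substitution to a query. -/
def Query3.subst (σ : ℕ → Trm) (Q : Query3) : Query3 := Q.map (Atom3.subst σ)

/-- The equation set pairing the corresponding argument terms of two atoms
(with the same predicate symbol). -/
def atom3Eqs (A H : Atom3) : EqSet :=
  zipEqs (A.inp ++ A.out ++ A.neu) (H.inp ++ H.out ++ H.neu)

/-- The SLD-resolvent of the query `Q`, with selected atom at position `i`,
and the clause `C`, via the mgu `θ`: `(A1,…,Ai−1, B, Ai+1,…,An)θ`. -/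
def Resolvent3 (Q : Query3) (i : ℕ) (C : Clause3) (θ : ℕ → Trm) : Query3 :=
  Query3.subst θ (Q.take i ++ C.body ++ Q.drop (i + 1))

/-- Relative well-modedness: variables in `S` count as already defined. -/
def WRel (S : Set ℕ) : Query3 → Prop
  | [] => True
  | A :: Q => varsL A.inp ⊆ S ∧ WRel (S ∪ varsL A.out) Q

/-- Variables in output positions of a query. -/
def outsQ (Q : Query3) : Set ℕ := {x | ∃ B ∈ Q, x ∈ varsL B.out}

/-- Variables of the images of `S` under `θ`. -/
def imgV (θ : ℕ → Trm) (S : Set ℕ) : Set ℕ := {x | ∃ y ∈ S, Trm.Occurs x (θ y)}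

theorem outsQ_cons (A : Atom3) (Q : Query3) : outsQ (A :: Q) = varsL A.out ∪ outsQ Q := by
  ext x; simp [outsQ]

theorem wrel_iff (Q : Query3) : ∀ S : Set ℕ, WRel S Q ↔
    ∀ (j : ℕ) (hj : j < Q.length), ∀ x ∈ varsL (Q.get ⟨j, hj⟩).inp,
      x ∈ S ∨ ∃ (i : ℕ) (hi : i < j), x ∈ varsL (Q.get ⟨i, by omega⟩).out := by
  induction Q with
  | nil => intro S; simp [WRel]
  | cons A Q ih =>
    intro S
    rw [WRel, ih]
    constructor
    · rintro ⟨h1, h2⟩ j hj x hx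
      cases j with
      | zero => exact Or.inl (h1 hx)
      | succ j =>
        rcases h2 j (by simpa using hj) x hx with (h | h) | ⟨i, hi, h⟩
        · exact Or.inl h
        · exact Or.inr ⟨0, by omega, h⟩
        · exact Or.inr ⟨i + 1, by omega, h⟩
    · intro h
      refine ⟨fun x hx => ?_, fun j hj x hx => ?_⟩
      · rcases h 0 (by simp) x hx with h | ⟨i, hi, _⟩
        · exact h
        · omega
      · rcases h (j + 1) (by simpa using hj) x hx with h | ⟨i, hi, h⟩
        · exact Or.inl (Or.inl h)
        · cases i with
          | zero => exact Or.inl (Or.inr h)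
          | succ i => exact Or.inr ⟨i, by omega, h⟩

theorem wellQ_iff (Q : Query3) : Well3Query Q ↔ WRel ∅ Q := by
  rw [wrel_iff]; simp [Well3Query]

theorem wrel_mono (Q : Query3) : ∀ S T : Set ℕ, S ⊆ T → WRel S Q → WRel T Q := by
  induction Q with
  | nil => intros; trivial
  | cons A Q ih =>
    intro S T h hw
    exact ⟨hw.1.trans h, ih _ _ (Set.union_subset_union_left _ h) hw.2⟩

theorem wrel_append (P R : Query3) : ∀ S : Set ℕ,
    WRel S (P ++ R) ↔ WRel S P ∧ WRel (S ∪ outsQ P) R := by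
  induction P with
  | nil => intro S; simp [WRel, outsQ]
  | cons A P ih =>
    intro S
    simp only [List.cons_append, WRel, ih, outsQ_cons, Set.union_assoc, and_assoc]

theorem occurs_subst (θ : ℕ → Trm) (x : ℕ) (t : Trm) :
    Trm.Occurs x (Trm.subst θ t) ↔ ∃ y, Trm.Occurs y t ∧ Trm.Occurs x (θ y) := by
  match t with
  | .var z =>
    rw [Trm.subst]
    constructor
    · intro h; exact ⟨z, .var, h⟩
    · rintro ⟨y, hy, h⟩; cases hy; exact h
  | .fn f ts =>
    rw [Trm.subst]
    constructor
    · intro h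
      cases h with
      | fn hm ho =>
        simp only [List.mem_map, List.mem_attach, true_and, Subtype.exists] at hm
        obtain ⟨u, hu, rfl⟩ := hm
        obtain ⟨y, hy, h⟩ := (occurs_subst θ x u).1 ho
        exact ⟨y, .fn hu hy, h⟩
    · rintro ⟨y, hy, h⟩
      cases hy with
      | @fn _ _ u hu ho =>
        refine .fn (t := Trm.subst θ u) ?_ ((occurs_subst θ x u).2 ⟨y, ho, h⟩)
        simp only [List.mem_map, List.mem_attach, true_and, Subtype.exists]
        exact ⟨u, hu, rfl⟩
termination_by sizeOf t
decreasing_by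
  all_goals
    have := List.sizeOf_lt_of_mem hu
    simp; omega

theorem varsL_map (θ : ℕ → Trm) (l : List Trm) :
    varsL (l.map (Trm.subst θ)) = imgV θ (varsL l) := by
  ext x
  simp only [varsL, imgV, Set.mem_ofPred_eq, List.mem_map]
  constructor
  · rintro ⟨_, ⟨t, ht, rfl⟩, h⟩
    obtain ⟨y, hy, h⟩ := (occurs_subst θ x t).1 h
    exact ⟨y, ⟨t, ht, hy⟩, h⟩
  · rintro ⟨y, ⟨t, ht, hy⟩, h⟩
    exact ⟨_, ⟨t, ht, rfl⟩, (occurs_subst θ x t).2 ⟨y, hy, h⟩⟩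

theorem imgV_mono (θ : ℕ → Trm) {S T : Set ℕ} (h : S ⊆ T) : imgV θ S ⊆ imgV θ T :=
  fun _ ⟨y, hy, hx⟩ => ⟨y, h hy, hx⟩

theorem imgV_union (θ : ℕ → Trm) (S T : Set ℕ) :
    imgV θ (S ∪ T) = imgV θ S ∪ imgV θ T := by
  ext x; simp only [imgV, Set.mem_ofPred_eq, Set.mem_union]; grind

theorem outsQ_subst (θ : ℕ → Trm) (Q : Query3) :
    outsQ (Query3.subst θ Q) = imgV θ (outsQ Q) := by
  induction Q with
  | nil => simp [outsQ, imgV, Query3.subst]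
  | cons A Q ih =>
    have : Query3.subst θ (A :: Q) = A.subst θ :: Query3.subst θ Q := rfl
    rw [this, outsQ_cons, outsQ_cons, imgV_union, ih, ← varsL_map]; rfl

theorem wrel_subst (θ : ℕ → Trm) (Q : Query3) : ∀ S : Set ℕ,
    WRel S Q → WRel (imgV θ S) (Query3.subst θ Q) := by
  induction Q with
  | nil => intros; trivial
  | cons A Q ih =>
    intro S h
    have : Query3.subst θ (A :: Q) = A.subst θ :: Query3.subst θ Q := rfl
    rw [this]
    refine ⟨?_, ?_⟩
    · have := imgV_mono θ h.1
      rwa [← varsL_map] at this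
    · have := ih _ h.2
      rwa [imgV_union, ← varsL_map] at this

theorem map_eq_of_zip (θ : ℕ → Trm) : ∀ s t : List Trm, s.length = t.length →
    (∀ e ∈ s.zip t, Trm.subst θ e.1 = Trm.subst θ e.2) →
    s.map (Trm.subst θ) = t.map (Trm.subst θ)
  | [], [], _, _ => rfl
  | a :: s, b :: t, hl, h => by
    rw [List.map_cons, List.map_cons, h (a, b) (by simp),
      map_eq_of_zip θ s t (by simpa using hl) (fun e he => h e (by simp [he]))]
  | [], _ :: _, hl, _ => by simp at hl
  | _ :: _, [], hl, _ => by simp at hl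

/-- Let `Q` be a well-3-moded query and `C` a well-3-moded clause that is
variable disjoint from `Q`.  Then every SLD-resolvent of `Q` and `C` is a
well-3-moded query. -/
theorem stmt14 (Q : Query3) (C : Clause3)
    (hQ : Well3Query Q) (hC : Well3Clause C)
    (hdisj : query3Vars Q ∩ clause3Vars C = ∅)
    (i : ℕ) (hi : i < Q.length)
    (hpred : (Q.get ⟨i, hi⟩).pred = C.head.pred)
    (hlen_in : (Q.get ⟨i, hi⟩).inp.length = C.head.inp.length)
    (hlen_out : (Q.get ⟨i, hi⟩).out.length = C.head.out.length)
    (hlen_neu : (Q.get ⟨i, hi⟩).neu.length = C.head.neu.length)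
    (θ : ℕ → Trm) (hθ : IsMgu θ (atom3Eqs (Q.get ⟨i, hi⟩) C.head)) :
    Well3Query (Resolvent3 Q i C θ) := by
  have hmap := map_eq_of_zip θ _ _ (by simp only [List.length_append, hlen_in, hlen_out, hlen_neu]) hθ.1
  generalize hA : Q.get ⟨i, hi⟩ = A at *
  simp only [List.map_append, List.append_assoc] at hmap
  obtain ⟨hin, hmap⟩ := List.append_inj hmap (by simpa using hlen_in)
  obtain ⟨hout, -⟩ := List.append_inj hmap (by simpa using hlen_out)
  have hin' := congrArg varsL hin
  have hout' := congrArg varsL hout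
  rw [varsL_map, varsL_map] at hin' hout'
  have hsplit : Q = Q.take i ++ A :: Q.drop (i + 1) := by
    rw [← hA]; simp
  rw [wellQ_iff, hsplit, wrel_append] at hQ
  obtain ⟨hP, hAin, hR⟩ := hQ
  have hB := (wrel_iff _ _).2 hC.2
  have hH : varsL C.head.out ⊆ varsL C.head.inp ∪ outsQ C.body := hC.1
  rw [wellQ_iff]
  have e : Resolvent3 Q i C θ = Query3.subst θ (Q.take i) ++ (Query3.subst θ C.body ++
      Query3.subst θ (Q.drop (i + 1))) := by
    simp [Resolvent3, Query3.subst]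
  rw [e, wrel_append, wrel_append, outsQ_subst, outsQ_subst]
  have hP' := wrel_subst θ _ _ hP
  have hB' := wrel_subst θ _ _ hB
  have hR' := wrel_subst θ _ _ hR
  have hAin' := imgV_mono θ hAin
  have hH' := imgV_mono θ hH
  have h0 : imgV θ ∅ = ∅ := by simp [imgV]
  simp only [imgV_union, h0, Set.empty_union] at *
  rw [hin'] at hAin'
  refine ⟨hP', wrel_mono _ _ _ hAin' hB', wrel_mono _ _ _ ?_ hR'⟩
  rw [hout']
  exact Set.union_subset Set.subset_union_left
    (hH'.trans (Set.union_subset_union_left _ hAin'))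
end
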